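/- arXiv:2603.28974 — 7 statements merged into one kernel-verified Lean document; each statement's English description precedes it below -/
import Mathlib

section
/- For every integer k ≥ 1 and all reals λ > 0 and g > 0, ∫₀^{g} f_K(k, λ, u) du = 1 − (2/(k−1)!)·(g/λ)^{k/2}·K(k, 2·√(g/λ)). -/
open MeasureTheory Real Set

/-- Modified Bessel function of the second kind of integer order, via its
integral representation `K(ν, x) = ∫₀^∞ exp(−x·cosh t)·cosh(ν·t) dt`. -/
noncomputable def besselK (ν : ℕ) (x : ℝ) : ℝ :=
  ∫ t in Set.Ioi (0 : ℝ), Real.exp (-(x * Real.cosh t)) * Real.cosh ((ν : ℝ) * t)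

/-- The K-distribution density with shape `k` and scale `λ`:
`f_K(k, λ, g) = (2·λ^{−(k+1)/2}/(k−1)!)·g^{(k−1)/2}·K(k−1, 2·√(g/λ))`. -/
noncomputable def fK (k : ℕ) (lam g : ℝ) : ℝ :=
  2 * lam ^ (-((k : ℝ) + 1) / 2) / (Nat.factorial (k - 1) : ℝ) *
    g ^ (((k : ℝ) - 1) / 2) * besselK (k - 1) (2 * Real.sqrt (g / lam))

/-- Integrand of the auxiliary integral. -/
noncomputable def auxF (n : ℕ) (s x : ℝ) : ℝ := x ^ n / x * exp (-x) * exp (-(s / x))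

lemma aux_gamma_int (n : ℕ) : IntegrableOn (fun x : ℝ => exp (-x) * x ^ n) (Ioi 0) := by
  have h := Real.GammaIntegral_convergent (s := (n : ℝ) + 1) (by positivity)
  refine h.congr_fun (fun x hx => ?_) measurableSet_Ioi
  simp [Real.rpow_natCast]

lemma aux_gamma_val (n : ℕ) : ∫ x in Ioi (0 : ℝ), exp (-x) * x ^ n = (Nat.factorial n : ℝ) := by
  rw [← Real.Gamma_nat_eq_factorial, Real.Gamma_eq_integral (by positivity)]
  refine setIntegral_congr_fun measurableSet_Ioi (fun x hx => ?_)
  simp [Real.rpow_natCast]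

lemma auxF_meas (n : ℕ) (s : ℝ) : Measurable (auxF n s) := by
  unfold auxF; fun_prop

lemma auxF_integrable (n : ℕ) (s : ℝ) (hs : 0 < s) : IntegrableOn (auxF n s) (Ioi 0) := by
  refine Integrable.mono' ((aux_gamma_int n).const_mul (1 / s)) (auxF_meas n s).aestronglyMeasurable ?_
  filter_upwards [ae_restrict_mem measurableSet_Ioi] with x hx
  have hx : 0 < x := hx
  unfold auxF
  rw [Real.norm_of_nonneg (by positivity)]
  have h1 : exp (-(s / x)) ≤ x / s := by
    rw [Real.exp_neg, inv_le_comm₀ (by positivity) (by positivity), inv_div]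
    linarith [Real.add_one_le_exp (s / x)]
  calc x ^ n / x * exp (-x) * exp (-(s / x)) ≤ x ^ n / x * exp (-x) * (x / s) := by gcongr
    _ = 1 / s * (exp (-x) * x ^ n) := by field_simp

lemma aux_image (a : ℝ) (ha : 0 < a) : (fun t : ℝ => a * exp t) '' univ = Ioi 0 := by
  ext x
  simp only [image_univ, mem_range, mem_Ioi]
  constructor
  · rintro ⟨t, rfl⟩; positivity
  · intro hx
    exact ⟨Real.log (x / a), by rw [Real.exp_log (by positivity)]; field_simp⟩

lemma aux_sub (n : ℕ) (a t : ℝ) (ha : 0 < a) :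
    |a * exp t| • auxF n (a ^ 2) (a * exp t) =
      a ^ n * (exp (-(2 * a * cosh t)) * exp (n * t)) := by
  have he := Real.exp_pos t
  rw [abs_of_pos (by positivity), smul_eq_mul, auxF, mul_pow, ← Real.exp_nat_mul]
  have h1 : a ^ 2 / (a * exp t) = a * exp (-t) := by rw [Real.exp_neg]; field_simp
  have h2 : exp (-(2 * a * cosh t)) = exp (-(a * exp t)) * exp (-(a * exp (-t))) := by
    rw [← Real.exp_add, Real.cosh_eq]; congr 1; ring
  rw [h1, h2]
  field_simp

lemma auxF_eq (n : ℕ) (s : ℝ) (hs : 0 < s) :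
    ∫ x in Ioi 0, auxF n s x = 2 * s ^ ((n : ℝ) / 2) * besselK n (2 * sqrt s) := by
  set a := sqrt s with ha'
  have ha : 0 < a := Real.sqrt_pos.2 hs
  have hsa : s = a ^ 2 := (Real.sq_sqrt hs.le).symm
  have hpow : s ^ ((n : ℝ) / 2) = a ^ n := by
    rw [ha', Real.sqrt_eq_rpow, ← Real.rpow_mul_natCast hs.le]; congr 1; ring
  rw [hpow]
  have hFint := auxF_integrable n s hs
  rw [hsa] at hFint ⊢
  have hder : ∀ t ∈ (univ : Set ℝ),
      HasDerivWithinAt (fun t : ℝ => a * exp t) (a * exp t) univ t :=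
    fun t _ => ((Real.hasDerivAt_exp t).const_mul a).hasDerivWithinAt
  have hinj : InjOn (fun t : ℝ => a * exp t) univ := fun x _ y _ h =>
    Real.exp_injective (mul_left_cancel₀ ha.ne' h)
  rw [← aux_image a ha] at hFint ⊢
  rw [integrableOn_image_iff_integrableOn_abs_deriv_smul MeasurableSet.univ hder hinj] at hFint
  rw [integral_image_eq_integral_abs_deriv_smul MeasurableSet.univ hder hinj]
  simp only [aux_sub n a _ ha, integrableOn_univ] at hFint
  simp only [aux_sub n a _ ha, Measure.restrict_univ]
  rw [integral_const_mul]
  have hFint2 : Integrable (fun t : ℝ => exp (-(2 * a * cosh t)) * exp (n * t)) := by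
    refine (hFint.const_mul (a ^ n)⁻¹).congr (Filter.Eventually.of_forall fun t => ?_)
    have : a ^ n ≠ 0 := by positivity
    simp only
    field_simp
  have hneg := hFint2.comp_neg
  rw [← intervalIntegral.integral_Iic_add_Ioi (b := 0) hFint2.integrableOn hFint2.integrableOn]
  have h1 := integral_comp_neg_Ioi 0 (fun t : ℝ => exp (-(2 * a * cosh t)) * exp (n * t))
  rw [neg_zero] at h1
  rw [← h1, ← integral_add hneg.integrableOn hFint2.integrableOn, besselK, mul_comm 2 (a ^ n),
    mul_assoc, ← integral_const_mul 2]
  congr 2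
  ext t
  rw [Real.cosh_neg, Real.cosh_eq (n * t), mul_neg]
  ring

lemma aux_inner (m : ℕ) (lam g x : ℝ) (hlam : 0 < lam) (hg : 0 < g) (hx : 0 < x) :
    ∫ u in Ioc 0 g, auxF m (u / lam) x =
      lam * (exp (-x) * x ^ m - auxF (m + 1) (g / lam) x) := by
  rw [← intervalIntegral.integral_of_le hg.le]
  have hd : ∀ u ∈ uIcc 0 g, HasDerivAt (fun u => -(lam * auxF (m + 1) (u / lam) x))
      (auxF m (u / lam) x) u := by
    intro u _
    have h0 : HasDerivAt (fun u : ℝ => -(u / lam / x)) (-(1 / lam / x)) u :=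
      (((hasDerivAt_id u).div_const lam).div_const x).neg
    have h := h0.exp.const_mul (-(lam * (x ^ (m + 1) / x * exp (-x))))
    unfold auxF
    have e1 : (fun u => -(lam * (x ^ (m + 1) / x * rexp (-x) * rexp (-(u / lam / x))))) =
        fun y => -(lam * (x ^ (m + 1) / x * rexp (-x))) * rexp (-(y / lam / x)) := by
      ext u; ring
    rw [e1]
    refine h.congr_deriv ?_
    field_simp
    ring
  rw [intervalIntegral.integral_eq_sub_of_hasDerivAt hd]
  · simp [auxF]; field_simp; ring
  · apply Continuous.intervalIntegrable
    unfold auxF; fun_prop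

lemma aux_swap (m : ℕ) (lam g : ℝ) (hlam : 0 < lam) (hg : 0 < g) :
    ∫ u in Ioc 0 g, ∫ x in Ioi 0, auxF m (u / lam) x =
      lam * ((Nat.factorial m : ℝ) - ∫ x in Ioi 0, auxF (m + 1) (g / lam) x) := by
  have hgi := auxF_integrable (m + 1) (g / lam) (by positivity)
  have hI : Integrable (fun x => lam * (exp (-x) * x ^ m - auxF (m + 1) (g / lam) x))
      (volume.restrict (Ioi 0)) := ((aux_gamma_int m).sub hgi).const_mul lam
  have hmeas : Measurable (fun p : ℝ × ℝ => auxF m (p.1 / lam) p.2) := by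
    unfold auxF; fun_prop
  rw [integral_integral_swap]
  · rw [setIntegral_congr_fun measurableSet_Ioi
      (fun x hx => aux_inner m lam g x hlam hg hx), integral_const_mul,
      integral_sub (aux_gamma_int m) hgi, aux_gamma_val]
  · change Integrable (fun p : ℝ × ℝ => auxF m (p.1 / lam) p.2) _
    rw [integrable_prod_iff' hmeas.aestronglyMeasurable]
    constructor
    · filter_upwards with x
      have : Continuous (fun u => auxF m (u / lam) x) := by unfold auxF; fun_prop
      exact (this.integrableOn_Icc (a := 0) (b := g)).mono_set Ioc_subset_Icc_self
    · refine hI.congr ?_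
      filter_upwards [ae_restrict_mem measurableSet_Ioi] with x hx
      have hx : 0 < x := hx
      rw [← aux_inner m lam g x hlam hg hx]
      congr 1
      ext u
      rw [Real.norm_of_nonneg]
      unfold auxF; positivity

/-- Closed-form CDF of the K-distribution:
`∫₀^g f_K(k, λ, u) du = 1 − (2/(k−1)!)·(g/λ)^{k/2}·K(k, 2·√(g/λ))`. -/
theorem fK_cdf (k : ℕ) (hk : 1 ≤ k) (lam g : ℝ) (hlam : 0 < lam) (hg : 0 < g) :
    ∫ u in Set.Ioc (0 : ℝ) g, fK k lam u =
      1 - 2 / (Nat.factorial (k - 1) : ℝ) *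
        (g / lam) ^ ((k : ℝ) / 2) * besselK k (2 * Real.sqrt (g / lam)) := by
  obtain ⟨m, rfl⟩ : ∃ m, k = m + 1 := ⟨k - 1, by omega⟩
  have hm : (0 : ℝ) < (Nat.factorial m : ℝ) := by positivity
  have hf : ∀ u ∈ Ioc 0 g, fK (m + 1) lam u =
      1 / (lam * (Nat.factorial m : ℝ)) * ∫ x in Ioi 0, auxF m (u / lam) x := by
    intro u hu
    have hu0 : 0 < u := hu.1
    rw [auxF_eq m (u / lam) (by positivity), fK, Real.div_rpow hu0.le hlam.le]
    have h1 : lam ^ (-(((m + 1 : ℕ) : ℝ) + 1) / 2) = (lam ^ ((m : ℝ) / 2))⁻¹ * lam⁻¹ := by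
      rw [← Real.rpow_neg hlam.le, ← Real.rpow_neg_one lam, ← Real.rpow_add hlam]
      congr 1; push_cast; ring
    have h2 : (((m + 1 : ℕ) : ℝ) - 1) / 2 = (m : ℝ) / 2 := by push_cast; ring
    have h3 : 0 < lam ^ ((m : ℝ) / 2) := by positivity
    rw [h1, h2]
    simp only [Nat.add_sub_cancel]
    field_simp
  rw [setIntegral_congr_fun measurableSet_Ioc hf, integral_const_mul, aux_swap m lam g hlam hg,
    auxF_eq (m + 1) (g / lam) (by positivity)]
  simp only [Nat.add_sub_cancel]
  field_simp
end

section
/- For every integer k ≥ 1 and every real λ > 0, the K-distribution density integrates to one: ∫₀^∞ f_K(k, λ, g) dg = 1. -/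
open MeasureTheory Real Set

open Filter Topology

lemma aux_deriv (n : ℕ) (t : ℝ) :
    HasDerivAt (fun t : ℝ => Real.sinh (((n : ℝ) + 1) * t) / Real.cosh t ^ (n + 1) / ((n : ℝ) + 1))
      (Real.cosh ((n : ℝ) * t) / Real.cosh t ^ (n + 2)) t := by
  have hc : Real.cosh t ≠ 0 := (Real.cosh_pos t).ne'
  have hn : (n : ℝ) + 1 ≠ 0 := by positivity
  have h1 : HasDerivAt (fun t : ℝ => Real.sinh (((n : ℝ) + 1) * t))
      (Real.cosh (((n : ℝ) + 1) * t) * (((n : ℝ) + 1) * 1)) t :=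
    ((hasDerivAt_id t).const_mul ((n : ℝ) + 1)).sinh
  have h2 : HasDerivAt (fun t : ℝ => Real.cosh t ^ (n + 1))
      (((n + 1 : ℕ) : ℝ) * Real.cosh t ^ n * Real.sinh t) t := by
    exact (Real.hasDerivAt_cosh t).pow (n + 1)
  have h3 := (h1.div h2 (pow_ne_zero _ hc)).div_const ((n : ℝ) + 1)
  refine h3.congr_deriv ?_
  have e : Real.cosh ((n : ℝ) * t) = Real.cosh (((n : ℝ) + 1) * t) * Real.cosh t
      - Real.sinh (((n : ℝ) + 1) * t) * Real.sinh t := by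
    rw [← Real.cosh_sub]; congr 1; ring
  rw [e]
  push_cast
  field_simp
  ring

lemma aux_lim (n : ℕ) :
    Tendsto (fun t : ℝ => Real.sinh (((n : ℝ) + 1) * t) / Real.cosh t ^ (n + 1) / ((n : ℝ) + 1))
      atTop (𝓝 (2 ^ n / ((n : ℝ) + 1))) := by
  refine Tendsto.div_const ?_ _
  have h : ∀ t : ℝ, Real.sinh (((n : ℝ) + 1) * t) / Real.cosh t ^ (n + 1)
      = 2 ^ n * (1 - Real.exp (-t) ^ (2 * (n + 1))) / (1 + Real.exp (-t) ^ 2) ^ (n + 1) := by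
    intro t
    have e1 : Real.exp (((n : ℝ) + 1) * t) = Real.exp t ^ (n + 1) := by
      rw [← Real.exp_nat_mul]; push_cast; rfl
    have hp := Real.exp_pos t
    have e2 : Real.cosh t = Real.exp t * (1 + Real.exp (-t) ^ 2) / 2 := by
      rw [Real.cosh_eq, Real.exp_neg]; field_simp
    rw [Real.sinh_eq, e2, Real.exp_neg (((n : ℝ) + 1) * t), e1, div_pow, mul_pow, pow_mul]
    have hq : 0 < 1 + Real.exp (-t) ^ 2 := by positivity
    generalize hw : 1 + Real.exp (-t) ^ 2 = w at *
    rw [Real.exp_neg, inv_pow, inv_pow, ← pow_mul, mul_comm 2, pow_mul]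
    field_simp
    ring
  simp_rw [h]
  have hx : Tendsto (fun t : ℝ => Real.exp (-t)) atTop (𝓝 0) := Real.tendsto_exp_neg_atTop_nhds_zero
  have : Tendsto (fun x : ℝ => 2 ^ n * (1 - x ^ (2 * (n + 1))) / (1 + x ^ 2) ^ (n + 1))
      (𝓝 0) (𝓝 (2 ^ n * (1 - (0:ℝ) ^ (2 * (n + 1))) / (1 + (0:ℝ) ^ 2) ^ (n + 1))) := by
    apply ContinuousAt.tendsto (f := fun x : ℝ => 2 ^ n * (1 - x ^ (2 * (n + 1))) / (1 + x ^ 2) ^ (n + 1))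
    apply ContinuousAt.div (by fun_prop) (by fun_prop)
    simp
  have h4 := this.comp hx
  simp only [Function.comp_def] at h4
  simpa using h4

lemma aux_int (n : ℕ) :
    IntegrableOn (fun t : ℝ => Real.cosh ((n : ℝ) * t) / Real.cosh t ^ (n + 2)) (Ioi 0) ∧
    ∫ t in Ioi (0 : ℝ), Real.cosh ((n : ℝ) * t) / Real.cosh t ^ (n + 2) = 2 ^ n / ((n : ℝ) + 1) := by
  have hpos : ∀ t ∈ Ioi (0 : ℝ), 0 ≤ Real.cosh ((n : ℝ) * t) / Real.cosh t ^ (n + 2) := by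
    intro t _
    have := Real.cosh_pos t
    have := Real.cosh_pos ((n : ℝ) * t)
    positivity
  refine ⟨integrableOn_Ioi_deriv_of_nonneg' (fun t _ => aux_deriv n t) hpos (aux_lim n), ?_⟩
  rw [integral_Ioi_of_hasDerivAt_of_nonneg' (fun t _ => aux_deriv n t) hpos (aux_lim n)]
  simp

lemma aux_inner_s8 (n : ℕ) (lam : ℝ) (hlam : 0 < lam) (c : ℝ) (hc : 0 < c) :
    IntegrableOn (fun g : ℝ => g ^ ((n : ℝ) / 2) * Real.exp (-(2 * Real.sqrt (g / lam) * c))) (Ioi 0) ∧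
    ∫ g in Ioi (0 : ℝ), g ^ ((n : ℝ) / 2) * Real.exp (-(2 * Real.sqrt (g / lam) * c))
      = 2 * (n + 1).factorial * lam ^ (((n : ℝ) + 2) / 2) / 2 ^ (n + 2) / c ^ (n + 2) := by
  have hs : 0 < Real.sqrt lam := Real.sqrt_pos.2 hlam
  have hb : 0 < 2 * c / Real.sqrt lam := by positivity
  have hq : (-1 : ℝ) < (n : ℝ) / 2 := by
    have : (0 : ℝ) ≤ (n : ℝ) / 2 := by positivity
    linarith
  have e : ∀ g : ℝ, g ^ ((n : ℝ) / 2) * Real.exp (-(2 * Real.sqrt (g / lam) * c))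
      = g ^ ((n : ℝ) / 2) * Real.exp (-(2 * c / Real.sqrt lam) * g ^ (1 / 2 : ℝ)) := by
    intro g
    rw [Real.sqrt_div' _ hlam.le, ← Real.sqrt_eq_rpow]
    congr 2
    ring
  simp_rw [e]
  have hI := integral_rpow_mul_exp_neg_mul_rpow (p := 1 / 2) (by norm_num) hq hb
  have hval : ∫ g in Ioi (0 : ℝ), g ^ ((n : ℝ) / 2) * Real.exp (-(2 * c / Real.sqrt lam) * g ^ (1 / 2 : ℝ))
      = 2 * (n + 1).factorial * lam ^ (((n : ℝ) + 2) / 2) / 2 ^ (n + 2) / c ^ (n + 2) := by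
    rw [hI]
    have e1 : -((n : ℝ) / 2 + 1) / (1 / 2) = -((n + 2 : ℕ) : ℝ) := by push_cast; ring
    have e2 : ((n : ℝ) / 2 + 1) / (1 / 2) = ((n + 1 : ℕ) : ℝ) + 1 := by push_cast; ring
    have e3 : lam ^ (((n : ℝ) + 2) / 2) = Real.sqrt lam ^ (n + 2) := by
      rw [Real.sqrt_eq_rpow, ← Real.rpow_natCast, ← Real.rpow_mul hlam.le]
      congr 1; push_cast; ring
    rw [e1, e2, Real.Gamma_nat_eq_factorial, Real.rpow_neg hb.le, Real.rpow_natCast, e3, div_pow, mul_pow]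
    field_simp
  refine ⟨?_, hval⟩
  by_contra hcon
  have h0 := integral_undef hcon
  rw [hval] at h0
  have : 0 < 2 * ((n + 1).factorial : ℝ) * lam ^ (((n : ℝ) + 2) / 2) / 2 ^ (n + 2) / c ^ (n + 2) := by
    positivity
  linarith

theorem fK_integral_eq_one (k : ℕ) (hk : 1 ≤ k) (lam : ℝ) (hlam : 0 < lam) :
    ∫ g in Set.Ioi (0 : ℝ), fK k lam g = 1 := by
  obtain ⟨n, rfl⟩ : ∃ n, k = n + 1 := ⟨k - 1, by omega⟩
  unfold fK besselK
  simp only [Nat.add_sub_cancel]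
  set C : ℝ := 2 * (n + 1).factorial * lam ^ (((n : ℝ) + 2) / 2) / 2 ^ (n + 2) with hC
  set F : ℝ → ℝ → ℝ := fun g t => g ^ ((n : ℝ) / 2) *
    Real.exp (-(2 * Real.sqrt (g / lam) * Real.cosh t)) * Real.cosh ((n : ℝ) * t) with hF
  have hinner : ∀ t : ℝ, ∫ g in Ioi (0 : ℝ), F g t
      = C * (Real.cosh ((n : ℝ) * t) / Real.cosh t ^ (n + 2)) := by
    intro t
    simp only [hF]
    rw [integral_mul_const, (aux_inner_s8 n lam hlam _ (Real.cosh_pos t)).2]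
    ring
  have hint : Integrable (Function.uncurry F)
      ((volume.restrict (Ioi (0 : ℝ))).prod (volume.restrict (Ioi (0 : ℝ)))) := by
    have hm : Measurable (Function.uncurry F) := by
      simp only [hF, Function.uncurry_def]
      have := Real.measurable_cosh
      fun_prop
    rw [integrable_prod_iff' hm.aestronglyMeasurable]
    constructor
    · refine Eventually.of_forall fun t => ?_
      exact (aux_inner_s8 n lam hlam _ (Real.cosh_pos t)).1.mul_const (Real.cosh ((n : ℝ) * t))
    · have : ∀ t : ℝ, ∫ g in Ioi (0 : ℝ), ‖Function.uncurry F (g, t)‖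
          = C * (Real.cosh ((n : ℝ) * t) / Real.cosh t ^ (n + 2)) := by
        intro t
        rw [← hinner t]
        refine setIntegral_congr_fun measurableSet_Ioi fun g hg => ?_
        have hg : 0 < g := hg
        have := Real.cosh_pos ((n : ℝ) * t)
        simp only [Function.uncurry_apply_pair]
        rw [Real.norm_of_nonneg]
        simp only [hF]
        positivity
      simp_rw [this]
      exact (aux_int n).1.const_mul _
  have hswap := integral_integral_swap hint
  simp_rw [hinner] at hswap
  rw [integral_const_mul, (aux_int n).2] at hswap
  have hre : ∀ g : ℝ, 2 * lam ^ (-(((n + 1 : ℕ) : ℝ) + 1) / 2) / (n.factorial : ℝ) *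
      g ^ ((((n + 1 : ℕ) : ℝ) - 1) / 2) *
      ∫ t in Ioi (0 : ℝ), Real.exp (-(2 * Real.sqrt (g / lam) * Real.cosh t)) * Real.cosh ((n : ℝ) * t)
      = 2 * lam ^ (-(((n + 1 : ℕ) : ℝ) + 1) / 2) / (n.factorial : ℝ) * ∫ t in Ioi (0 : ℝ), F g t := by
    intro g
    simp only [hF, mul_assoc]
    rw [integral_const_mul]
    push_cast
    rw [add_sub_cancel_right]
  simp_rw [hre]
  rw [integral_const_mul, hswap, hC]
  have e1 : -(((n + 1 : ℕ) : ℝ) + 1) / 2 = -(((n : ℝ) + 2) / 2) := by push_cast; ring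
  rw [e1, Real.rpow_neg hlam.le, Nat.factorial_succ]
  have : 0 < lam ^ (((n : ℝ) + 2) / 2) := by positivity
  have : (0 : ℝ) < n.factorial := by positivity
  push_cast
  field_simp
  ring
end

section
/- Let m ≥ 1 be an integer and λ > 0 a real. Let T and E be independent real random variables, where T has the Gamma distribution with shape m and scale λ, and E is exponentially distributed with rate 1. Then the law of the product T·E is absolutely continuous with density g ↦ (2/(m−1)!)·λ^{−(m+1)/2}·g^{(m−1)/2}·K(m−1, 2·√(g/λ)) for g > 0 (and 0 for g ≤ 0). -/
open MeasureTheory Real Set ProbabilityTheory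

/-- The Gamma distribution with (positive integer) shape `m` and scale `lam`, i.e. the
measure on `ℝ` with density `t^{m−1}·exp(−t/λ)/(λ^m·(m−1)!)` for `t ≥ 0`. -/
noncomputable def gammaScaleMeasure (m : ℕ) (lam : ℝ) : Measure ℝ :=
  volume.withDensity fun t =>
    ENNReal.ofReal (if 0 ≤ t then t ^ (m - 1) * Real.exp (-t / lam) /
      (lam ^ m * (Nat.factorial (m - 1) : ℝ)) else 0)

/-- The exponential distribution with rate `r`, i.e. the measure on `ℝ` with density
`r·exp(−r·t)` for `t ≥ 0`. -/
noncomputable def expDist (r : ℝ) : Measure ℝ :=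
  volume.withDensity fun t => ENNReal.ofReal (if 0 ≤ t then r * Real.exp (-(r * t)) else 0)

open scoped ENNReal

lemma kd_exp_subst (c : ℝ) (hc : 0 < c) (f : ℝ → ℝ≥0∞) :
    ∫⁻ t in Ioi (0:ℝ), f t = ∫⁻ u : ℝ, ENNReal.ofReal (c * Real.exp u) * f (c * Real.exp u) := by
  have himg : (fun u : ℝ => c * Real.exp u) '' univ = Ioi 0 := by
    ext t
    simp only [image_univ, mem_range, mem_Ioi]
    constructor
    · rintro ⟨u, rfl⟩; positivity
    · intro ht
      refine ⟨Real.log (t / c), ?_⟩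
      rw [Real.exp_log (by positivity)]
      field_simp
  rw [← himg, lintegral_image_eq_lintegral_abs_deriv_mul (f' := fun u => c * Real.exp u)
    MeasurableSet.univ]
  · rw [Measure.restrict_univ]
    refine lintegral_congr fun u => ?_
    rw [abs_of_pos (by positivity)]
  · intro u _
    exact ((Real.hasDerivAt_exp u).const_mul c).hasDerivWithinAt
  · intro a _ b _ h
    exact Real.exp_injective (mul_left_cancel₀ hc.ne' h)

lemma kd_fold (h : ℝ → ℝ≥0∞) (hh : Measurable h) :
    ∫⁻ u : ℝ, h u = ∫⁻ u in Ioi (0:ℝ), (h u + h (-u)) := by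
  rw [lintegral_add_left hh, ← lintegral_add_compl h (measurableSet_Ioi (a := (0:ℝ)))]
  congr 1
  have : (Ioi (0:ℝ))ᶜ = (fun u : ℝ => -u) '' Ici 0 := by
    ext; simp
  rw [this, lintegral_image_eq_lintegral_abs_deriv_mul (f' := fun _ => -1) measurableSet_Ici
    (fun u _ => (hasDerivAt_neg u).hasDerivWithinAt) (neg_injective.injOn)]
  rw [setLIntegral_congr (Ioi_ae_eq_Ici (a := (0:ℝ))).symm]
  simp

lemma kd_ofReal_integral (μ : Measure ℝ) (f : ℝ → ℝ) (hf : Measurable f) (h0 : ∀ x, 0 ≤ f x)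
    (hfin : ∫⁻ x, ENNReal.ofReal (f x) ∂μ ≠ ⊤) :
    ENNReal.ofReal (∫ x, f x ∂μ) = ∫⁻ x, ENNReal.ofReal (f x) ∂μ := by
  rw [integral_eq_lintegral_of_nonneg_ae (ae_of_all _ h0) hf.aestronglyMeasurable,
    ENNReal.ofReal_toReal hfin]

/-- real identity for the integrand after substitution -/
lemma kd_integrand (n : ℕ) (lam g u : ℝ) (hlam : 0 < lam) (hg : 0 < g) :
    let c := Real.sqrt (g * lam)
    (c * Real.exp u) * (((c * Real.exp u) ^ n * Real.exp (-(c * Real.exp u) / lam) /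
      (lam ^ (n+1) * (Nat.factorial n : ℝ))) *
      ((c * Real.exp u)⁻¹ * Real.exp (-(g / (c * Real.exp u))))) =
    c ^ n / (lam ^ (n+1) * (Nat.factorial n : ℝ)) *
      (Real.exp (-(2 * Real.sqrt (g / lam) * Real.cosh u)) * Real.exp (n * u)) := by
  intro c
  have hc : 0 < c := Real.sqrt_pos.2 (by positivity)
  have hc2 : c * c = g * lam := Real.mul_self_sqrt (by positivity)
  have hs : Real.sqrt (g / lam) = c / lam := by
    rw [Real.sqrt_eq_iff_mul_self_eq (by positivity) (by positivity)]
    field_simp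
    nlinarith
  have hgc : g / c = c / lam := by
    field_simp; nlinarith
  have e1 : Real.exp (-(2 * Real.sqrt (g / lam) * Real.cosh u)) =
      Real.exp (-(c * Real.exp u) / lam) * Real.exp (-(g / (c * Real.exp u))) := by
    rw [← Real.exp_add, hs, Real.cosh_eq, ← div_div, hgc, Real.exp_neg u]
    congr 1
    field_simp
    ring
  have e2 : Real.exp (n * u) = Real.exp u ^ n := Real.exp_nat_mul u n
  rw [e1, e2, mul_pow]
  have := Real.exp_pos u
  field_simp

lemma kd_const (n : ℕ) (lam g : ℝ) (hlam : 0 < lam) (hg : 0 < g) :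
    2 * (Real.sqrt (g * lam) ^ n / (lam ^ (n+1) * (Nat.factorial n : ℝ))) =
    2 / (Nat.factorial n : ℝ) * lam ^ (-(((n + 1 : ℕ) : ℝ) + 1) / 2) *
            g ^ ((((n + 1 : ℕ) : ℝ) - 1) / 2) := by
  have h1 : Real.sqrt (g * lam) ^ n = g ^ ((n:ℝ)/2) * lam ^ ((n:ℝ)/2) := by
    rw [Real.sqrt_eq_rpow, ← Real.rpow_natCast, ← Real.rpow_mul (by positivity),
      Real.mul_rpow hg.le hlam.le]
    congr 2 <;> ring
  have h2 : lam ^ (-(((n + 1 : ℕ) : ℝ) + 1) / 2) = lam ^ ((n:ℝ)/2) / lam ^ (n+1) := by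
    rw [← Real.rpow_natCast, ← Real.rpow_sub hlam]
    congr 1; push_cast; ring
  have h3 : (((n + 1 : ℕ) : ℝ) - 1) / 2 = (n:ℝ)/2 := by push_cast; ring
  rw [h1, h2, h3]
  field_simp

lemma kd_inner (n : ℕ) (lam g : ℝ) (hlam : 0 < lam) (hg : 0 < g)
    (hfin : ∫⁻ t in Ioi (0:ℝ), ENNReal.ofReal (t ^ n * Real.exp (-t / lam) /
      (lam ^ (n+1) * (Nat.factorial n : ℝ))) ≠ ⊤) :
    ∫⁻ t in Ioi (0:ℝ), ENNReal.ofReal ((t ^ n * Real.exp (-t / lam) /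
      (lam ^ (n+1) * (Nat.factorial n : ℝ))) * (t⁻¹ * Real.exp (-(g / t)))) =
    ENNReal.ofReal (2 / (Nat.factorial n : ℝ) * lam ^ (-(((n + 1 : ℕ) : ℝ) + 1) / 2) *
            g ^ ((((n + 1 : ℕ) : ℝ) - 1) / 2) * besselK n (2 * Real.sqrt (g / lam))) := by
  have hfin2 : ∫⁻ t in Ioi (0:ℝ), ENNReal.ofReal ((t ^ n * Real.exp (-t / lam) /
      (lam ^ (n+1) * (Nat.factorial n : ℝ))) * (t⁻¹ * Real.exp (-(g / t)))) ≠ ⊤ := by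
    refine ne_top_of_le_ne_top (ENNReal.mul_ne_top hfin (ENNReal.ofReal_ne_top (r := g⁻¹))) ?_
    rw [← lintegral_mul_const' _ _ ENNReal.ofReal_ne_top]
    refine setLIntegral_mono' measurableSet_Ioi fun t ht => ?_
    have ht : 0 < t := ht
    rw [← ENNReal.ofReal_mul (by positivity)]
    refine ENNReal.ofReal_le_ofReal ?_
    gcongr
    have h1 : g / t ≤ Real.exp (g / t) := by linarith [Real.add_one_le_exp (g / t)]
    rw [Real.exp_neg, ← mul_inv]
    apply inv_anti₀ hg
    calc g = t * (g / t) := by field_simp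
      _ ≤ _ := by gcongr
  set A := Real.sqrt (g * lam) ^ n / (lam ^ (n+1) * (Nat.factorial n : ℝ)) with hA
  have hA0 : 0 ≤ A := by positivity
  have key : ∫⁻ t in Ioi (0:ℝ), ENNReal.ofReal ((t ^ n * Real.exp (-t / lam) /
      (lam ^ (n+1) * (Nat.factorial n : ℝ))) * (t⁻¹ * Real.exp (-(g / t)))) =
      ∫⁻ u in Ioi (0:ℝ), ENNReal.ofReal (2 * A *
       (Real.exp (-(2 * Real.sqrt (g / lam) * Real.cosh u)) * Real.cosh ((n:ℝ) * u))) := by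
    have hc : 0 < Real.sqrt (g * lam) := Real.sqrt_pos.2 (by positivity)
    rw [kd_exp_subst _ hc]
    have : ∀ u : ℝ, ENNReal.ofReal (Real.sqrt (g * lam) * Real.exp u) * ENNReal.ofReal
        (((Real.sqrt (g * lam) * Real.exp u) ^ n *
          Real.exp (-(Real.sqrt (g * lam) * Real.exp u) / lam) /
      (lam ^ (n+1) * (Nat.factorial n : ℝ))) * ((Real.sqrt (g * lam) * Real.exp u)⁻¹ *
        Real.exp (-(g / (Real.sqrt (g * lam) * Real.exp u))))) =
        ENNReal.ofReal (A * (Real.exp (-(2 * Real.sqrt (g / lam) * Real.cosh u)) *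
          Real.exp (n * u))) := by
      intro u
      rw [← ENNReal.ofReal_mul (by positivity), kd_integrand n lam g u hlam hg]
    simp_rw [this]
    rw [kd_fold _ (by fun_prop)]
    refine lintegral_congr fun u => ?_
    rw [← ENNReal.ofReal_add (by positivity) (by positivity)]
    congr 1
    rw [Real.cosh_neg, Real.cosh_eq ((n:ℝ) * u), mul_neg]
    ring
  rw [key] at hfin2 ⊢
  rw [← kd_ofReal_integral _ _ (by fun_prop) (fun u => ?_) hfin2, integral_const_mul,
    hA, kd_const n lam g hlam hg]
  · rfl
  · have := Real.cosh_pos ((n:ℝ) * u)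
    positivity

lemma kd_scale (t : ℝ) (ht : 0 < t) (F : ℝ → ℝ≥0∞) (hF : Measurable F) :
    ∫⁻ e, F e = ENNReal.ofReal t⁻¹ * ∫⁻ g, F (t⁻¹ * g) := by
  have h := Real.smul_map_volume_mul_left (a := t⁻¹) (by positivity)
  rw [abs_of_pos (by positivity)] at h
  conv_lhs => rw [← h]
  rw [lintegral_smul_measure, lintegral_map hF (by fun_prop)]
  rfl

/-- Equal-eigenvalue (fully correlated) case: if `T ∼ Gamma(m, λ)` and `E ∼ Exp(1)` are
independent, then `T·E` has the classical K-distribution density with shape `m` and scale `λ`: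
`g ↦ (2/(m−1)!)·λ^{−(m+1)/2}·g^{(m−1)/2}·K(m−1, 2·√(g/λ))` for `g > 0`. -/
theorem gamma_times_exp_K_density (m : ℕ) (hm : 1 ≤ m) (lam : ℝ) (hlam : 0 < lam)
    {Ω : Type*} [MeasurableSpace Ω] (P : Measure Ω) [IsProbabilityMeasure P]
    (T E : Ω → ℝ) (hTmeas : Measurable T) (hEmeas : Measurable E)
    (hindep : IndepFun T E P)
    (hTlaw : Measure.map T P = gammaScaleMeasure m lam)
    (hElaw : Measure.map E P = expDist 1) :
    Measure.map (fun ω => T ω * E ω) P =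
      volume.withDensity fun g =>
        ENNReal.ofReal (if 0 < g then
          2 / (Nat.factorial (m - 1) : ℝ) * lam ^ (-((m : ℝ) + 1) / 2) *
            g ^ (((m : ℝ) - 1) / 2) * besselK (m - 1) (2 * Real.sqrt (g / lam))
          else 0) := by
  obtain ⟨n, rfl⟩ : ∃ n, m = n + 1 := ⟨m - 1, by omega⟩
  simp only [Nat.add_sub_cancel] at *
  set f : ℝ → ℝ := fun t => t ^ n * Real.exp (-t / lam) / (lam ^ (n+1) * (Nat.factorial n : ℝ))
    with hf
  have hfm : Measurable f := by fun_prop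
  have hf0 : ∀ t, 0 < t → 0 ≤ f t := fun t ht => by positivity
  -- the two laws as restricted densities
  have hT : Measure.map T P = (volume.restrict (Ioi 0)).withDensity
      (fun t => ENNReal.ofReal (f t)) := by
    rw [hTlaw, gammaScaleMeasure, restrict_Ioi_eq_restrict_Ici,
      ← withDensity_indicator measurableSet_Ici]
    congr 1
    ext t
    by_cases h : 0 ≤ t <;> simp [h, hf, indicator]
  have hE : Measure.map E P = volume.withDensity
      ((Ioi 0).indicator (fun t => ENNReal.ofReal (Real.exp (-t)))) := by
    rw [hElaw, expDist, withDensity_indicator measurableSet_Ioi, restrict_Ioi_eq_restrict_Ici,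
      ← withDensity_indicator measurableSet_Ici]
    congr 1
    ext t
    by_cases h : 0 ≤ t <;> simp [h, indicator]
  have hfin : ∫⁻ t in Ioi (0:ℝ), ENNReal.ofReal (f t) ≠ ⊤ := by
    have h1 : Measure.map T P univ ≠ ⊤ := by
      rw [Measure.map_apply hTmeas MeasurableSet.univ]
      exact measure_ne_top _ _
    rwa [hT, withDensity_apply _ MeasurableSet.univ, Measure.restrict_univ] at h1
  have hprod := hindep.map_prod_eq_prod_map_map hTmeas.aemeasurable hEmeas.aemeasurable
  have hem : Measurable ((Ioi (0:ℝ)).indicator (fun t => ENNReal.ofReal (Real.exp (-t)))) :=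
    Measurable.indicator (by fun_prop) measurableSet_Ioi
  have : IsProbabilityMeasure (Measure.map E P) := Measure.isProbabilityMeasure_map hEmeas.aemeasurable
  ext s hs
  have hsm : Measurable (s.indicator (1 : ℝ → ℝ≥0∞)) := measurable_one.indicator hs
  have step1 : Measure.map (fun ω => T ω * E ω) P s =
      ∫⁻ t, ∫⁻ e, s.indicator 1 (t * e) ∂(Measure.map E P) ∂(Measure.map T P) := by
    rw [← lintegral_indicator_one hs, lintegral_map hsm (by fun_prop)]
    rw [← lintegral_prod (fun p : ℝ × ℝ => s.indicator (1 : ℝ → ℝ≥0∞) (p.1 * p.2))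
      (by exact (hsm.comp (measurable_fst.mul measurable_snd)).aemeasurable), ← hprod,
      lintegral_map (by exact (hsm.comp (measurable_fst.mul measurable_snd))) (by fun_prop)]
  have hmeas2 : Measurable fun t : ℝ =>
      ∫⁻ e, s.indicator (1 : ℝ → ℝ≥0∞) (t * e) ∂(Measure.map E P) :=
    Measurable.lintegral_prod_right'
      (f := fun p : ℝ × ℝ => s.indicator (1 : ℝ → ℝ≥0∞) (p.1 * p.2))
      (hsm.comp (measurable_fst.mul measurable_snd))
  have hEt : ∀ t : ℝ, 0 < t → ∫⁻ e, s.indicator (1 : ℝ → ℝ≥0∞) (t * e) ∂(Measure.map E P) =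
      ∫⁻ g, ENNReal.ofReal t⁻¹ * ((Ioi (0:ℝ)).indicator
        (fun g => ENNReal.ofReal (Real.exp (-(g / t)))) g * s.indicator 1 g) := by
    intro t ht
    have hst : Measurable fun e : ℝ => s.indicator (1 : ℝ → ℝ≥0∞) (t * e) :=
      hsm.comp (measurable_const.mul measurable_id)
    rw [hE, lintegral_withDensity_eq_lintegral_mul _ hem hst,
      kd_scale t ht _ (hem.mul hst), lintegral_const_mul' _ _ ENNReal.ofReal_ne_top]
    congr 1
    refine lintegral_congr fun g => ?_
    have h1 : t * (t⁻¹ * g) = g := by field_simp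
    have h2 : t⁻¹ * g = g / t := by field_simp
    have h3 : (0 < g / t) ↔ 0 < g := by
      constructor
      · intro h
        have := mul_pos h ht
        rwa [div_mul_cancel₀ _ ht.ne'] at this
      · intro h; positivity
    simp only [Pi.mul_apply, h1]
    rw [h2]
    congr 1
    simp only [indicator, mem_Ioi, h3]
  rw [step1, hT, lintegral_withDensity_eq_lintegral_mul _ (by fun_prop) hmeas2]
  have step2 : ∫⁻ t in Ioi (0:ℝ), ((fun t => ENNReal.ofReal (f t)) *
      fun t => ∫⁻ e, s.indicator (1 : ℝ → ℝ≥0∞) (t * e) ∂(Measure.map E P)) t =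
      ∫⁻ t in Ioi (0:ℝ), ∫⁻ g, ENNReal.ofReal (f t) * (ENNReal.ofReal t⁻¹ *
        ((Ioi (0:ℝ)).indicator
        (fun g => ENNReal.ofReal (Real.exp (-(g / t)))) g * s.indicator 1 g)) := by
    refine setLIntegral_congr_fun measurableSet_Ioi fun t ht => ?_
    simp only [Pi.mul_apply]
    rw [hEt t ht, ← lintegral_const_mul' _ _ ENNReal.ofReal_ne_top]
  rw [step2, lintegral_lintegral_swap, withDensity_apply _ hs, ← lintegral_indicator hs]
  · refine lintegral_congr fun g => ?_
    by_cases hgs : g ∈ s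
    · by_cases hg : 0 < g
      · simp only [indicator, hgs, mem_Ioi, hg, if_true]
        rw [← kd_inner n lam g hlam hg hfin]
        refine setLIntegral_congr_fun measurableSet_Ioi fun t ht => ?_
        have ht : 0 < t := ht
        simp only [Pi.one_apply, mul_one]
        rw [← ENNReal.ofReal_mul (by positivity), ← ENNReal.ofReal_mul (hf0 t ht)]
      · simp [indicator, hg]
    · simp [indicator, hgs]
  · have hA : Measurable fun p : ℝ × ℝ => (Ioi (0:ℝ)).indicator
        (fun g => ENNReal.ofReal (Real.exp (-(g / p.1)))) p.2 := by
      have : (fun p : ℝ × ℝ => (Ioi (0:ℝ)).indicator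
        (fun g => ENNReal.ofReal (Real.exp (-(g / p.1)))) p.2) =
        (Prod.snd ⁻¹' (Ioi (0:ℝ))).indicator
          (fun p : ℝ × ℝ => ENNReal.ofReal (Real.exp (-(p.2 / p.1)))) := by
        ext p; simp [indicator]
      rw [this]
      exact Measurable.indicator (by fun_prop) (measurable_snd measurableSet_Ioi)
    have hB : Measurable fun p : ℝ × ℝ => s.indicator (1 : ℝ → ℝ≥0∞) p.2 :=
      hsm.comp measurable_snd
    have hC : Measurable fun p : ℝ × ℝ => ENNReal.ofReal (f p.1) := by fun_prop
    have hD : Measurable fun p : ℝ × ℝ => ENNReal.ofReal (p.1)⁻¹ := by fun_prop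
    exact (hC.mul (hD.mul (hA.mul hB))).aemeasurable
end

section
/- Let m ≥ 1 be an integer and λ > 0 a real. Let T and E be independent real random variables, where T has the Gamma distribution with shape m and scale λ, and E is exponentially distributed with rate 1. Then for every real R > 0, P(T·E ≤ R) = 1 − (2/(m−1)!)·(R/λ)^{m/2}·K(m, 2·√(R/λ)). -/
open MeasureTheory Real Set ProbabilityTheory

lemma aux_integrable (n : ℕ) (lam R : ℝ) (hlam : 0 < lam) (hR : 0 < R) :
    IntegrableOn (fun t : ℝ => t ^ n * Real.exp (-t / lam) * Real.exp (-(R / t))) (Ioi 0) := by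
  have h := integrableOn_rpow_mul_exp_neg_mul_rpow (p := 1) (s := (n : ℝ)) (b := 1 / lam)
    (by have : (0:ℝ) ≤ n := Nat.cast_nonneg n
        linarith) zero_lt_one (by positivity)
  refine Integrable.mono' h ?_ ?_
  · apply Measurable.aestronglyMeasurable
    fun_prop
  · refine (ae_restrict_iff' measurableSet_Ioi).2 (Filter.Eventually.of_forall fun t ht => ?_)
    have ht : 0 < t := ht
    rw [Real.norm_of_nonneg (by positivity), Real.rpow_natCast, Real.rpow_one]
    have h1 : Real.exp (-(R / t)) ≤ 1 := by
      rw [Real.exp_le_one_iff]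
      have : 0 < R / t := by positivity
      linarith
    have h2 : -t / lam = -(1 / lam) * t := by ring
    rw [h2]
    exact mul_le_of_le_one_right (by positivity) h1

lemma aux_image_s10 (c : ℝ) (hc : 0 < c) : (fun u : ℝ => c * Real.exp u) '' univ = Ioi 0 := by
  ext t
  simp only [image_univ, mem_range, mem_Ioi]
  constructor
  · rintro ⟨u, rfl⟩
    positivity
  · intro ht
    refine ⟨Real.log (t / c), ?_⟩
    rw [Real.exp_log (by positivity)]
    field_simp

lemma aux_bessel (m : ℕ) (hm : 1 ≤ m) (lam R : ℝ) (hlam : 0 < lam) (hR : 0 < R) :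
    ∫ t in Ioi (0:ℝ), t ^ (m - 1) * Real.exp (-t / lam) * Real.exp (-(R / t)) =
      lam ^ m * (2 * (R / lam) ^ ((m : ℝ) / 2) * besselK m (2 * Real.sqrt (R / lam))) := by
  set s := Real.sqrt (R / lam) with hs
  have hspos : 0 < s := Real.sqrt_pos.2 (by positivity)
  have hsq : s * s = R / lam := Real.mul_self_sqrt (by positivity)
  have hRe : R = s * s * lam := by rw [hsq]; field_simp
  have hpow : (R / lam) ^ ((m : ℝ) / 2) = s ^ m := by
    rw [hs, Real.sqrt_eq_rpow, ← Real.rpow_natCast, ← Real.rpow_mul (by positivity)]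
    congr 1
    ring
  have hc : 0 < lam * s := by positivity
  have hder : ∀ u ∈ (univ : Set ℝ), HasDerivWithinAt (fun u : ℝ => lam * s * Real.exp u)
      (lam * s * Real.exp u) univ u := fun u _ =>
    ((Real.hasDerivAt_exp u).const_mul _).hasDerivWithinAt
  have hinj : InjOn (fun u : ℝ => lam * s * Real.exp u) univ := by
    intro a _ b _ h
    exact Real.exp_injective (mul_left_cancel₀ hc.ne' h)
  have key : ∀ u : ℝ, |lam * s * Real.exp u| • ((lam * s * Real.exp u) ^ (m - 1) *
      Real.exp (-(lam * s * Real.exp u) / lam) * Real.exp (-(R / (lam * s * Real.exp u)))) =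
      (lam * s) ^ m * (Real.exp (m * u) * Real.exp (-(2 * s * Real.cosh u))) := by
    intro u
    rw [abs_of_pos (by positivity), smul_eq_mul, mul_assoc ((lam * s * Real.exp u) ^ (m - 1)),
      ← mul_assoc, ← pow_succ', Nat.sub_add_cancel hm, ← Real.exp_add, mul_pow, Real.exp_nat_mul,
      mul_assoc]
    congr 3
    rw [Real.cosh_eq, hRe, Real.exp_neg]
    field_simp
    ring
  have hint := aux_integrable (m - 1) lam R hlam hR
  rw [← aux_image_s10 _ hc, integrableOn_image_iff_integrableOn_abs_deriv_smul MeasurableSet.univ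
    hder hinj] at hint
  simp only [key] at hint
  rw [integrableOn_univ] at hint
  have hint2 : Integrable (fun u : ℝ => Real.exp (m * u) * Real.exp (-(2 * s * Real.cosh u))) := by
    have := hint.const_mul (((lam * s) ^ m)⁻¹)
    refine this.congr (Filter.Eventually.of_forall fun u => ?_)
    simp only []
    field_simp
  rw [← aux_image_s10 _ hc, integral_image_eq_integral_abs_deriv_smul MeasurableSet.univ hder hinj]
  simp only [key]
  rw [setIntegral_univ, integral_const_mul, hpow, mul_pow, mul_assoc]
  congr 1
  rw [mul_comm 2 (s ^ m), mul_assoc]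
  congr 1
  have hneg := hint2.comp_neg
  rw [← intervalIntegral.integral_Iic_add_Ioi (b := (0:ℝ)) hint2.integrableOn hint2.integrableOn]
  have h1 := integral_comp_neg_Ioi (0:ℝ)
    (fun u : ℝ => Real.exp (m * u) * Real.exp (-(2 * s * Real.cosh u)))
  rw [neg_zero] at h1
  rw [← h1, ← integral_add hneg.integrableOn hint2.integrableOn, besselK, ← integral_const_mul]
  congr 1
  ext u
  rw [Real.cosh_neg, Real.cosh_eq (m * u), mul_neg]
  ring

lemma aux_exp (t R : ℝ) (ht : 0 < t) (hR : 0 < R) :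
    expDist 1 {e | R < t * e} = ENNReal.ofReal (Real.exp (-(R / t))) := by
  have hset : {e : ℝ | R < t * e} = Ioi (R / t) := by
    ext e
    simp only [mem_ofPred_eq, mem_Ioi]
    rw [div_lt_iff₀' ht]
  rw [hset, expDist, withDensity_apply _ measurableSet_Ioi]
  have : ∫⁻ e in Ioi (R / t), ENNReal.ofReal (if 0 ≤ e then 1 * Real.exp (-(1 * e)) else 0) =
      ∫⁻ e in Ioi (R / t), ENNReal.ofReal (Real.exp (-e)) := by
    refine setLIntegral_congr_fun measurableSet_Ioi fun e he => ?_
    have : 0 ≤ e := le_of_lt (lt_trans (div_pos hR ht) he)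
    simp [this]
  rw [this, ← ofReal_integral_eq_lintegral_ofReal, integral_exp_neg_Ioi]
  · exact integrableOn_exp_neg_Ioi _
  · exact Filter.Eventually.of_forall fun _ => (Real.exp_pos _).le

theorem gamma_times_exp_cdf (m : ℕ) (hm : 1 ≤ m) (lam : ℝ) (hlam : 0 < lam)
    {Ω : Type*} [MeasurableSpace Ω] (P : Measure Ω) [IsProbabilityMeasure P]
    (T E : Ω → ℝ) (hTmeas : Measurable T) (hEmeas : Measurable E)
    (hindep : IndepFun T E P)
    (hTlaw : Measure.map T P = gammaScaleMeasure m lam)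
    (hElaw : Measure.map E P = expDist 1)
    (R : ℝ) (hR : 0 < R) :
    (P {ω | T ω * E ω ≤ R}).toReal =
      1 - 2 / (Nat.factorial (m - 1) : ℝ) * (R / lam) ^ ((m : ℝ) / 2) *
        besselK m (2 * Real.sqrt (R / lam)) := by
  have hpE : IsProbabilityMeasure (expDist 1) := by
    rw [← hElaw]; exact Measure.isProbabilityMeasure_map hEmeas.aemeasurable
  have hpT : IsProbabilityMeasure (gammaScaleMeasure m lam) := by
    rw [← hTlaw]; exact Measure.isProbabilityMeasure_map hTmeas.aemeasurable
  have hSm : MeasurableSet {p : ℝ × ℝ | R < p.1 * p.2} :=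
    measurableSet_lt measurable_const (measurable_fst.mul measurable_snd)
  have hjoint : P.map (fun ω => (T ω, E ω)) = (gammaScaleMeasure m lam).prod (expDist 1) := by
    rw [(indepFun_iff_map_prod_eq_prod_map_map hTmeas.aemeasurable hEmeas.aemeasurable).1 hindep,
      hTlaw, hElaw]
  have hcompl : P {ω | R < T ω * E ω} =
      (gammaScaleMeasure m lam).prod (expDist 1) {p : ℝ × ℝ | R < p.1 * p.2} := by
    rw [← hjoint, Measure.map_apply (hTmeas.prodMk hEmeas) hSm]
    rfl
  have hmeas : MeasurableSet {ω | R < T ω * E ω} :=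
    measurableSet_lt measurable_const (hTmeas.mul hEmeas)
  have hC : (0:ℝ) < lam ^ m * (Nat.factorial (m - 1) : ℝ) := by positivity
  have hval : P {ω | R < T ω * E ω} = ∫⁻ t in Ioi (0:ℝ), ENNReal.ofReal
      ((lam ^ m * (Nat.factorial (m - 1) : ℝ))⁻¹ *
        (t ^ (m - 1) * Real.exp (-t / lam) * Real.exp (-(R / t)))) := by
    rw [hcompl, Measure.prod_apply hSm, gammaScaleMeasure, lintegral_withDensity_eq_lintegral_mul]
    · rw [← lintegral_indicator measurableSet_Ioi]
      have h0 : ∀ᵐ t : ℝ, t ≠ 0 := by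
        simp [ae_iff, measure_singleton]
      refine lintegral_congr_ae ?_
      filter_upwards [h0] with t ht
      rcases lt_or_gt_of_ne ht with h | h
      · have hnonneg : ¬ (0 ≤ t) := not_le.2 h
        have hmemt : t ∉ Ioi (0:ℝ) := fun hh => hnonneg (le_of_lt hh)
        simp [hnonneg, hmemt]
      · have hmemt : t ∈ Ioi (0:ℝ) := h
        rw [indicator_of_mem hmemt, Pi.mul_apply, if_pos h.le]
        have : (Prod.mk t ⁻¹' {p : ℝ × ℝ | R < p.1 * p.2}) = {e | R < t * e} := rfl
        rw [this, aux_exp t R h hR, ← ENNReal.ofReal_mul (by positivity)]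
        congr 1
        ring
    · refine ENNReal.measurable_ofReal.comp (Measurable.ite measurableSet_Ici ?_ measurable_const)
      fun_prop
    · exact measurable_measure_prodMk_left hSm
  have hset : {ω | T ω * E ω ≤ R} = {ω | R < T ω * E ω}ᶜ := by
    ext ω; simp
  have hreal : (P {ω | R < T ω * E ω}).toReal =
      (lam ^ m * (Nat.factorial (m - 1) : ℝ))⁻¹ *
        (lam ^ m * (2 * (R / lam) ^ ((m : ℝ) / 2) * besselK m (2 * Real.sqrt (R / lam)))) := by
    rw [← aux_bessel m hm lam R hlam hR, ← integral_const_mul, hval,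
      integral_eq_lintegral_of_nonneg_ae]
    · refine (ae_restrict_iff' measurableSet_Ioi).2 (Filter.Eventually.of_forall fun t ht => ?_)
      have ht : 0 < t := ht
      simp only [Pi.zero_apply]
      positivity
    · apply Measurable.aestronglyMeasurable
      fun_prop
  have hfin := probReal_compl_eq_one_sub (μ := P) hmeas
  rw [Measure.real, Measure.real] at hfin
  rw [hset, hfin, hreal]
  have hf : (Nat.factorial (m - 1) : ℝ) ≠ 0 := by positivity
  field_simp
end

section
/- For every real λ > 0, lim_{g → 0⁺} [1 − 2·√(g/λ)·K(1, 2·√(g/λ))] / (−(g/λ)·ln(g/λ)) = 1. -/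
open MeasureTheory Real Set Filter Topology

lemma K1aux_A (x : ℝ) (hx : 0 < x) :
    IntegrableOn (fun t => x * cosh t * exp (-(x * sinh t))) (Ioi 0) ∧
    ∫ t in Ioi (0:ℝ), x * cosh t * exp (-(x * sinh t)) = 1 := by
  have hd : ∀ t ∈ Ici (0:ℝ), HasDerivAt (fun t => -exp (-(x * sinh t)))
      (x * cosh t * exp (-(x * sinh t))) t := by
    intro t _
    have h := (((Real.hasDerivAt_sinh t).const_mul x).neg.exp).neg
    refine HasDerivAt.congr_deriv h ?_
    simp only [Pi.neg_apply]
    ring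
  have hpos : ∀ t ∈ Ioi (0:ℝ), 0 ≤ x * cosh t * exp (-(x * sinh t)) := by
    intro t _
    have := Real.cosh_pos t
    positivity
  have hlim : Tendsto (fun t => -exp (-(x * sinh t))) atTop (𝓝 0) := by
    have h1 : Tendsto (fun t => x * sinh t) atTop atTop := by
      apply Tendsto.const_mul_atTop hx
      refine tendsto_atTop_mono' _ ?_ tendsto_id
      filter_upwards [eventually_ge_atTop 0] with t ht
      exact Real.self_le_sinh_iff.2 ht
    have h2 := (Real.tendsto_exp_neg_atTop_nhds_zero.comp h1).neg
    simpa using h2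
  refine ⟨integrableOn_Ioi_deriv_of_nonneg' hd hpos hlim, ?_⟩
  rw [integral_Ioi_of_hasDerivAt_of_nonneg' hd hpos hlim]
  simp

lemma K1aux_D (x : ℝ) (hx : 0 < x) :
    IntegrableOn (fun t => x * cosh t * exp (-(x * sinh t)) * (1 - exp (-(x * exp (-t))))) (Ioi 0) ∧
    1 - x * besselK 1 x =
      ∫ t in Ioi (0:ℝ), x * cosh t * exp (-(x * sinh t)) * (1 - exp (-(x * exp (-t)))) := by
  obtain ⟨hA, hA1⟩ := K1aux_A x hx
  have hB : IntegrableOn (fun t => x * (exp (-(x * cosh t)) * cosh ((1:ℕ) * t))) (Ioi 0) := by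
    refine Integrable.mono' hA ?_ ?_
    · apply Continuous.aestronglyMeasurable
      fun_prop
    · refine Eventually.of_forall fun t => ?_
      have := Real.cosh_pos t
      have h3 : exp (-(x * cosh t)) ≤ exp (-(x * sinh t)) := by
        apply Real.exp_le_exp.2
        have := Real.sinh_lt_cosh t
        nlinarith
      rw [Nat.cast_one, one_mul, Real.norm_of_nonneg (by positivity)]
      calc _ = x * cosh t * exp (-(x * cosh t)) := by ring
        _ ≤ _ := by gcongr
  have heq : (fun t => x * cosh t * exp (-(x * sinh t)) * (1 - exp (-(x * exp (-t))))) =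
      fun t => x * cosh t * exp (-(x * sinh t)) - x * (exp (-(x * cosh t)) * cosh ((1:ℕ) * t)) := by
    funext t
    have : exp (-(x * cosh t)) = exp (-(x * sinh t)) * exp (-(x * exp (-t))) := by
      rw [← Real.exp_add, ← Real.cosh_sub_sinh t]
      congr 1; ring
    rw [this, Nat.cast_one, one_mul]; ring
  rw [heq]
  refine ⟨hA.sub hB, ?_⟩
  rw [integral_sub hA hB, hA1, integral_const_mul]
  rfl

lemma K1aux_bounds (x : ℝ) (hx : 0 < x) (hx1 : x < 1) :
    x ^ 2 / 2 * (log (2 / x) * (1 - x / 2) - 1) ≤ 1 - x * besselK 1 x ∧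
    1 - x * besselK 1 x ≤ x ^ 2 / 2 * (log (2 / x) + 7) := by
  obtain ⟨hD, hDe⟩ := K1aux_D x hx
  rw [hDe]
  set T := log (2 / x) with hT
  have hT0 : 0 < T := Real.log_pos (by rw [lt_div_iff₀ hx]; linarith)
  have heT : exp T = 2 / x := Real.exp_log (by positivity)
  have hsplit : Ioi (0:ℝ) = Ioc 0 T ∪ Ioi T := (Ioc_union_Ioi_eq_Ioi hT0.le).symm
  have hD1 := hD.mono_set (Ioc_subset_Ioi_self : Ioc 0 T ⊆ Ioi 0)
  have hD2 := hD.mono_set (Ioi_subset_Ioi hT0.le)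
  rw [hsplit, setIntegral_union (Ioc_disjoint_Ioi le_rfl) measurableSet_Ioi hD1 hD2]
  have hnn : ∀ t, 0 ≤ x * cosh t * exp (-(x * sinh t)) * (1 - exp (-(x * exp (-t)))) := by
    intro t
    have h1 := Real.cosh_pos t
    have h2 : exp (-(x * exp (-t))) ≤ 1 := by
      apply Real.exp_le_one_iff.2
      have : 0 < x * exp (-t) := by positivity
      linarith
    have h3 : 0 ≤ 1 - exp (-(x * exp (-t))) := by linarith
    positivity
  -- pointwise upper bound
  have hup : ∀ t, 0 < t → x * cosh t * exp (-(x * sinh t)) * (1 - exp (-(x * exp (-t)))) ≤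
      x ^ 2 / 2 * (1 + exp (-t)) * exp (-(x * sinh t)) := by
    intro t ht
    have h1 := Real.cosh_pos t
    have h2 : 1 - exp (-(x * exp (-t))) ≤ x * exp (-t) := by
      have := Real.add_one_le_exp (-(x * exp (-t)))
      linarith
    have h4 : exp t * exp (-t) = 1 := by rw [← Real.exp_add]; simp
    have h5 : exp (-t) ≤ 1 := Real.exp_le_one_iff.2 (by linarith)
    have h6 : cosh t * exp (-t) ≤ (1 + exp (-t)) / 2 := by
      rw [Real.cosh_eq]
      nlinarith [Real.exp_pos (-t)]
    calc _ ≤ x * cosh t * exp (-(x * sinh t)) * (x * exp (-t)) := by gcongr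
      _ = x ^ 2 * exp (-(x * sinh t)) * (cosh t * exp (-t)) := by ring
      _ ≤ x ^ 2 * exp (-(x * sinh t)) * ((1 + exp (-t)) / 2) := by gcongr
      _ = _ := by ring
  constructor
  · have h2 : 0 ≤ ∫ t in Ioi T, x * cosh t * exp (-(x * sinh t)) * (1 - exp (-(x * exp (-t)))) :=
      integral_nonneg hnn
    have h1 : ∫ t in Ioc 0 T, x ^ 2 / 2 * ((1 - x / 2) - x / 2 * exp t) ≤
        ∫ t in Ioc 0 T, x * cosh t * exp (-(x * sinh t)) * (1 - exp (-(x * exp (-t)))) := by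
      apply setIntegral_mono_on _ hD1 measurableSet_Ioc
      · intro t ht
        have hy : x / 2 * exp t ≤ 1 := by
          have : exp t ≤ exp T := Real.exp_le_exp.2 ht.2
          rw [heT] at this
          calc _ ≤ x / 2 * (2 / x) := by gcongr
            _ = 1 := by field_simp
        have h4 : exp t * exp (-t) = 1 := by rw [← Real.exp_add]; simp
        have hep := Real.exp_pos (-t)
        have hep' := Real.exp_pos t
        have h5 : exp (-t) ≤ 1 := Real.exp_le_one_iff.2 (by linarith [ht.1])
        have a1 : exp t / 2 ≤ cosh t := by rw [Real.cosh_eq]; linarith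
        have a2 : 1 - x / 2 * exp t ≤ exp (-(x * sinh t)) := by
          have := Real.add_one_le_exp (-(x * sinh t))
          rw [Real.sinh_eq] at this ⊢
          nlinarith
        have a3 : x * exp (-t) * (1 - x / 2) ≤ 1 - exp (-(x * exp (-t))) := by
          have hz : 0 ≤ x * exp (-t) := by positivity
          have hz1 : x * exp (-t) ≤ x := by nlinarith
          have := Real.quadratic_le_exp_of_nonneg hz
          have hE : exp (-(x * exp (-t))) ≤ 1 - x * exp (-t) + (x * exp (-t))^2 / 2 := by
            set z := x * exp (-t)
            rw [Real.exp_neg, inv_le_iff_one_le_mul₀ (Real.exp_pos z)]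
            have : 0 ≤ 1 - z + z ^ 2 / 2 := by nlinarith
            calc (1:ℝ) ≤ (1 - z + z ^ 2 / 2) * (1 + z + z ^ 2 / 2) := by nlinarith [sq_nonneg (z^2)]
              _ ≤ _ := by gcongr
          nlinarith
        calc _ ≤ x ^ 2 / 2 * ((1 - x / 2 * exp t) * (1 - x / 2)) := by
              gcongr
              have : 0 ≤ x / 2 * (x / 2 * exp t) := by positivity
              nlinarith
          _ = x * (exp t / 2) * (1 - x / 2 * exp t) * (x * exp (-t) * (1 - x / 2)) := by
              linear_combination (-(x ^ 2 / 2 * ((1 - x / 2 * exp t) * (1 - x / 2)))) * h4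
          _ ≤ _ := by
              have b1 : 0 ≤ 1 - x / 2 * exp t := by linarith
              have b2 : 0 ≤ 1 - x / 2 := by linarith
              have := Real.cosh_pos t
              gcongr
      · exact (Continuous.integrableOn_Ioc (by fun_prop))
    have h3 : ∫ t in Ioc 0 T, x ^ 2 / 2 * ((1 - x / 2) - x / 2 * exp t) =
        x ^ 2 / 2 * (T * (1 - x / 2) - x / 2 * (exp T - 1)) := by
      rw [← intervalIntegral.integral_of_le hT0.le, intervalIntegral.integral_const_mul,
        intervalIntegral.integral_sub (by simp) (Continuous.intervalIntegrable (by fun_prop) _ _),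
        intervalIntegral.integral_const_mul, integral_exp]
      simp
      left
      ring
    have h4 : x / 2 * (exp T - 1) ≤ 1 := by
      rw [heT]
      have : x / 2 * (2 / x - 1) = 1 - x / 2 := by field_simp
      linarith
    calc _ ≤ x ^ 2 / 2 * (T * (1 - x / 2) - x / 2 * (exp T - 1)) := by gcongr
      _ ≤ _ := by linarith
  · have hE : IntegrableOn (fun t : ℝ => exp (-t)) (Ioi T) := integrableOn_exp_neg_Ioi T
    have h1 : ∫ t in Ioc 0 T, x * cosh t * exp (-(x * sinh t)) * (1 - exp (-(x * exp (-t)))) ≤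
        ∫ t in Ioc 0 T, x ^ 2 / 2 * (1 + exp (-t)) := by
      apply setIntegral_mono_on hD1 (Continuous.integrableOn_Ioc (by fun_prop)) measurableSet_Ioc
      intro t ht
      refine (hup t ht.1).trans ?_
      apply mul_le_of_le_one_right (by positivity)
      apply Real.exp_le_one_iff.2
      have := Real.sinh_nonneg_iff.2 ht.1.le
      have : 0 ≤ x * sinh t := by positivity
      linarith
    have h3 : ∫ t in Ioc 0 T, x ^ 2 / 2 * (1 + exp (-t)) ≤ x ^ 2 / 2 * (T + 1) := by
      rw [← intervalIntegral.integral_of_le hT0.le, intervalIntegral.integral_const_mul,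
        intervalIntegral.integral_add (by simp) (Continuous.intervalIntegrable (by fun_prop) _ _),
        intervalIntegral.integral_comp_neg (fun t => exp t), integral_exp]
      have := Real.exp_pos (-T)
      simp
      gcongr
      linarith
    have h2 : ∫ t in Ioi T, x * cosh t * exp (-(x * sinh t)) * (1 - exp (-(x * exp (-t)))) ≤
        ∫ t in Ioi T, (x ^ 2 / 2 * 6 * exp T) * exp (-t) := by
      apply setIntegral_mono_on hD2 (hE.const_mul _) measurableSet_Ioi
      intro t ht
      have ht0 : 0 < t := hT0.trans ht
      refine (hup t ht0).trans ?_
      have h5 : exp (-t) ≤ 1 := Real.exp_le_one_iff.2 (by linarith)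
      have h6 : exp (-(x * sinh t)) ≤ 3 * (exp T * exp (-t)) := by
        have e1 : x / 2 * exp t = exp (t - T) := by
          rw [Real.exp_sub, heT]; field_simp
        have e2 := Real.add_one_le_exp (t - T)
        have e3 : -(x * sinh t) ≤ 1 + (T + -t) := by
          rw [Real.sinh_eq]
          nlinarith [Real.exp_pos (-t)]
        calc _ ≤ exp (1 + (T + -t)) := Real.exp_le_exp.2 e3
          _ = exp 1 * (exp T * exp (-t)) := by rw [Real.exp_add, Real.exp_add]
          _ ≤ _ := by
            gcongr
            linarith [Real.exp_one_lt_d9]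
      calc _ ≤ x ^ 2 / 2 * (1 + 1) * (3 * (exp T * exp (-t))) := by gcongr
        _ = _ := by ring
    rw [integral_const_mul, integral_exp_neg_Ioi] at h2
    have h4 : exp T * exp (-T) = 1 := by rw [← Real.exp_add]; simp
    have h5 : x ^ 2 / 2 * 6 * exp T * exp (-T) = x ^ 2 / 2 * 6 := by
      rw [mul_assoc, h4, mul_one]
    linarith

theorem K1_cdf_asymptotic (lam : ℝ) (hlam : 0 < lam) :
    Filter.Tendsto
      (fun g : ℝ =>
        (1 - 2 * Real.sqrt (g / lam) * besselK 1 (2 * Real.sqrt (g / lam))) /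
          (-(g / lam) * Real.log (g / lam)))
      (nhdsWithin 0 (Set.Ioi 0)) (nhds 1) := by
  have hu : Tendsto (fun g : ℝ => g / lam) (𝓝[>] 0) (𝓝[>] 0) := by
    apply tendsto_nhdsWithin_of_tendsto_nhds_of_eventually_within
    · have : Tendsto (fun g : ℝ => g / lam) (𝓝 0) (𝓝 (0 / lam)) :=
        (continuous_id.div_const lam).tendsto 0
      rw [zero_div] at this
      exact this.mono_left nhdsWithin_le_nhds
    · filter_upwards [self_mem_nhdsWithin] with g hg
      exact div_pos hg hlam
  suffices h : Tendsto (fun u : ℝ => (1 - 2 * √u * besselK 1 (2 * √u)) / (-u * log u))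
      (𝓝[>] 0) (𝓝 1) from h.comp hu
  have hs : Tendsto (fun u : ℝ => √u) (𝓝[>] 0) (𝓝 0) := by
    have := Real.continuous_sqrt.tendsto 0
    rw [Real.sqrt_zero] at this
    exact this.mono_left nhdsWithin_le_nhds
  have hl : Tendsto (fun u : ℝ => (log u)⁻¹) (𝓝[>] 0) (𝓝 0) :=
    tendsto_inv_atBot_zero.comp Real.tendsto_log_nhdsGT_zero
  have hlo : Tendsto (fun u : ℝ => (1 - √u) + 2 * (log u)⁻¹) (𝓝[>] 0) (𝓝 1) := by
    simpa using (hs.const_sub 1).add (hl.const_mul 2)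
  have hhi : Tendsto (fun u : ℝ => 1 - 14 * (log u)⁻¹) (𝓝[>] 0) (𝓝 1) := by
    simpa using (hl.const_mul 14).const_sub 1
  have hev : ∀ᶠ u : ℝ in 𝓝[>] 0, u < 1 / 4 ∧ 0 < u :=
    ((eventually_lt_nhds (by norm_num)).filter_mono nhdsWithin_le_nhds).and self_mem_nhdsWithin
  have key : ∀ u : ℝ, u < 1 / 4 → 0 < u → 0 < -u * log u ∧ log u < 0 ∧
      2 * u * (-(log u) / 2 * (1 - √u) - 1) ≤ 1 - 2 * √u * besselK 1 (2 * √u) ∧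
      1 - 2 * √u * besselK 1 (2 * √u) ≤ 2 * u * (-(log u) / 2 + 7) := by
    intro u h1 h0
    have hlog : log u < 0 := Real.log_neg h0 (by linarith)
    have hsq : √u ^ 2 = u := Real.sq_sqrt h0.le
    have hs0 : 0 < √u := Real.sqrt_pos.2 h0
    have hs1 : √u < 1 / 2 := by nlinarith
    obtain ⟨b1, b2⟩ := K1aux_bounds (2 * √u) (by positivity) (by linarith)
    have hT : log (2 / (2 * √u)) = -(log u) / 2 := by
      have : 2 / (2 * √u) = (√u)⁻¹ := by field_simp
      rw [this, Real.log_inv, Real.log_sqrt h0.le]; ring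
    have hx : (2 * √u) ^ 2 / 2 = 2 * u := by rw [mul_pow, hsq]; ring
    have hx' : 2 * √u / 2 = √u := by ring
    rw [hT, hx] at b1 b2
    rw [hx'] at b1
    exact ⟨by nlinarith, hlog, b1, b2⟩
  refine tendsto_of_tendsto_of_tendsto_of_le_of_le' hlo hhi ?_ ?_
  · filter_upwards [hev] with u hu
    obtain ⟨hp, hlog, b1, b2⟩ := key u hu.1 hu.2
    rw [le_div_iff₀ hp]
    have : ((1 - √u) + 2 * (log u)⁻¹) * (-u * log u) =
        2 * u * (-(log u) / 2 * (1 - √u) - 1) := by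
      have := hlog.ne
      field_simp
      ring
    linarith
  · filter_upwards [hev] with u hu
    obtain ⟨hp, hlog, b1, b2⟩ := key u hu.1 hu.2
    rw [div_le_iff₀ hp]
    have : (1 - 14 * (log u)⁻¹) * (-u * log u) = 2 * u * (-(log u) / 2 + 7) := by
      have := hlog.ne
      field_simp
      ring
    linarith
end

section
/- For every integer k ≥ 2 and every real λ > 0, lim_{g → 0⁺} [1 − (2/(k−1)!)·(g/λ)^{k/2}·K(k, 2·√(g/λ))] / (g/λ) = 1/(k−1). -/
open MeasureTheory Real Set Filter Topology

lemma aux_gamma (n : ℕ) :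
    IntegrableOn (fun s : ℝ => s ^ n * Real.exp (-s)) (Ioi 0) ∧
      ∫ s in Ioi (0 : ℝ), s ^ n * Real.exp (-s) = (n.factorial : ℝ) := by
  have h : ∀ s ∈ Ioi (0 : ℝ), Real.exp (-s) * s ^ ((n : ℝ) + 1 - 1) = s ^ n * Real.exp (-s) := by
    intro s _
    rw [add_sub_cancel_right, Real.rpow_natCast, mul_comm]
  constructor
  · have := Real.GammaIntegral_convergent (s := (n : ℝ) + 1) (by positivity)
    exact this.congr_fun h measurableSet_Ioi
  · rw [← Real.Gamma_nat_eq_factorial, Real.Gamma_eq_integral (by positivity)]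
    exact (setIntegral_congr_fun measurableSet_Ioi h).symm

lemma aux_int_s16 (n : ℕ) (y : ℝ) (hy : 0 < y) :
    IntegrableOn (fun s : ℝ => s ^ n * Real.exp (-s) * Real.exp (-(y / s))) (Ioi 0) := by
  refine Integrable.mono' (aux_gamma n).1 (Measurable.aestronglyMeasurable (by fun_prop)) ?_
  refine (ae_restrict_iff' measurableSet_Ioi).2 (Eventually.of_forall fun s hs => ?_)
  have hs : 0 < s := hs
  rw [Real.norm_of_nonneg (by positivity)]
  have : Real.exp (-(y / s)) ≤ 1 := Real.exp_le_one_iff.2 (by have := div_pos hy hs; linarith)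
  exact mul_le_of_le_one_right (by positivity) this

lemma aux_bessel_s16 (n : ℕ) (y : ℝ) (hy : 0 < y) :
    2 * y ^ (((n + 1 : ℕ) : ℝ) / 2) * besselK (n + 1) (2 * Real.sqrt y) =
      ∫ s in Ioi (0 : ℝ), s ^ n * Real.exp (-s) * Real.exp (-(y / s)) := by
  set r := Real.sqrt y with hr
  have hr0 : 0 < r := Real.sqrt_pos.2 hy
  have hry : y = r * r := (Real.mul_self_sqrt hy.le).symm
  have hpow : y ^ (((n + 1 : ℕ) : ℝ) / 2) = r ^ (n + 1) := by
    rw [hr, Real.sqrt_eq_rpow, ← Real.rpow_natCast, ← Real.rpow_mul hy.le]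
    congr 1; ring
  set F : ℝ → ℝ := fun t => Real.exp (-(2 * r * Real.cosh t)) * Real.exp (((n + 1 : ℕ) : ℝ) * t)
    with hF
  have himg : (fun t : ℝ => r * Real.exp t) '' univ = Ioi 0 := by
    ext s
    simp only [image_univ, mem_range, mem_Ioi]
    constructor
    · rintro ⟨t, rfl⟩; positivity
    · intro hs
      exact ⟨Real.log (s / r), by rw [Real.exp_log (by positivity)]; field_simp⟩
  have hder : ∀ t ∈ (univ : Set ℝ),
      HasDerivWithinAt (fun t : ℝ => r * Real.exp t) (r * Real.exp t) univ t :=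
    fun t _ => ((Real.hasDerivAt_exp t).const_mul r).hasDerivWithinAt
  have hinj : InjOn (fun t : ℝ => r * Real.exp t) univ := by
    intro a _ b _ hab
    exact Real.exp_injective (mul_left_cancel₀ hr0.ne' hab)
  have hpt : ∀ t : ℝ, |r * Real.exp t| • ((r * Real.exp t) ^ n * Real.exp (-(r * Real.exp t)) *
      Real.exp (-(y / (r * Real.exp t)))) = r ^ (n + 1) * F t := by
    intro t
    have e1 : y / (r * Real.exp t) = r * Real.exp (-t) := by
      rw [Real.exp_neg, hry]; field_simp
    have e2 : Real.exp (((n + 1 : ℕ) : ℝ) * t) = Real.exp t ^ (n + 1) := Real.exp_nat_mul t (n + 1)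
    have e3 : Real.exp (-(2 * r * Real.cosh t)) =
        Real.exp (-(r * Real.exp t)) * Real.exp (-(r * Real.exp (-t))) := by
      rw [← Real.exp_add, Real.cosh_eq]; congr 1; ring
    simp only [hF]
    rw [e1, e2, e3, abs_of_pos (by positivity), smul_eq_mul]
    ring
  have hI := integrableOn_image_iff_integrableOn_abs_deriv_smul MeasurableSet.univ hder hinj
    (fun s : ℝ => s ^ n * Real.exp (-s) * Real.exp (-(y / s)))
  have hE := integral_image_eq_integral_abs_deriv_smul MeasurableSet.univ hder hinj
    (fun s : ℝ => s ^ n * Real.exp (-s) * Real.exp (-(y / s)))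
  rw [himg] at hI hE
  simp only [hpt] at hI hE
  have hFi : Integrable F := by
    have := hI.1 (aux_int_s16 n y hy)
    rw [integrableOn_univ] at this
    have h2 := this.const_mul (r ^ (n + 1))⁻¹
    refine h2.congr (Eventually.of_forall fun t => ?_)
    simp only []
    field_simp
  rw [hE, setIntegral_univ, integral_const_mul, hpow]
  have hsplit : ∫ t, F t = (∫ t in Ioi (0 : ℝ), F (-t)) + ∫ t in Ioi (0 : ℝ), F t := by
    rw [integral_comp_neg_Ioi, neg_zero, intervalIntegral.integral_Iic_add_Ioi
      hFi.integrableOn hFi.integrableOn]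
  have hb : 2 * besselK (n + 1) (2 * r) = ∫ t, F t := by
    rw [hsplit, ← integral_add hFi.comp_neg.integrableOn hFi.integrableOn, besselK,
      ← integral_const_mul]
    congr 1
    funext t
    simp only [hF, Real.cosh_neg]
    rw [Real.cosh_eq (((n + 1 : ℕ) : ℝ) * t), mul_neg]
    ring
  rw [← hb]; ring

lemma aux_lim_s16 (n : ℕ) :
    Tendsto (fun y : ℝ => (((n + 1).factorial : ℝ) -
      ∫ s in Ioi (0 : ℝ), s ^ (n + 1) * Real.exp (-s) * Real.exp (-(y / s))) / y)
      (𝓝[>] 0) (𝓝 (n.factorial : ℝ)) := by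
  have key : Tendsto (fun y : ℝ => ∫ s in Ioi (0 : ℝ),
      s ^ (n + 1) * Real.exp (-s) * ((1 - Real.exp (-(y / s))) / y))
      (𝓝[>] 0) (𝓝 (∫ s in Ioi (0 : ℝ), s ^ n * Real.exp (-s))) := by
    refine tendsto_integral_filter_of_dominated_convergence (fun s => s ^ n * Real.exp (-s))
      (Eventually.of_forall fun y => Measurable.aestronglyMeasurable (by fun_prop)) ?_
      (aux_gamma n).1 ?_
    · filter_upwards [self_mem_nhdsWithin] with y hy
      have hy : 0 < y := hy
      refine (ae_restrict_iff' measurableSet_Ioi).2 (Eventually.of_forall fun s hs => ?_)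
      have hs : 0 < s := hs
      have h1 : Real.exp (-(y / s)) ≤ 1 :=
        Real.exp_le_one_iff.2 (by have := div_pos hy hs; linarith)
      have h2 := Real.add_one_le_exp (-(y / s))
      have h3 : (1 - Real.exp (-(y / s))) / y ≤ 1 / s := by
        rw [div_le_iff₀ hy]
        have : 1 / s * y = y / s := by ring
        linarith
      have h4 : 0 ≤ (1 - Real.exp (-(y / s))) / y := div_nonneg (by linarith) hy.le
      rw [Real.norm_of_nonneg (by positivity)]
      calc _ ≤ s ^ (n + 1) * Real.exp (-s) * (1 / s) := by gcongr
        _ = _ := by rw [pow_succ]; field_simp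
    · refine (ae_restrict_iff' measurableSet_Ioi).2 (Eventually.of_forall fun s hs => ?_)
      have hs : 0 < s := hs
      have hd : HasDerivAt (fun y : ℝ => 1 - Real.exp (-(y / s))) (1 / s) 0 := by
        have := ((((hasDerivAt_id (0 : ℝ)).div_const s).neg).exp).const_sub 1
        simpa using this
      have ht := hd.tendsto_slope_zero_right
      have := ht.const_mul (s ^ (n + 1) * Real.exp (-s))
      have e : s ^ (n + 1) * Real.exp (-s) * (1 / s) = s ^ n * Real.exp (-s) := by
        rw [pow_succ]; field_simp
      rw [e] at this
      refine this.congr fun y => ?_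
      simp
      left
      ring
  rw [(aux_gamma n).2] at key
  refine key.congr' ?_
  filter_upwards [self_mem_nhdsWithin] with y hy
  rw [← (aux_gamma (n + 1)).2, ← integral_sub (aux_gamma (n + 1)).1 (aux_int_s16 (n + 1) y hy),
    ← integral_div]
  congr 1
  funext s
  ring

/-- High-SNR asymptotic of the shape-`k` K-distribution CDF for `k ≥ 2`:
`[1 − (2/(k−1)!)·(g/λ)^{k/2}·K(k, 2·√(g/λ))] / (g/λ) → 1/(k−1)` as `g → 0⁺`. -/
theorem Kk_cdf_asymptotic (k : ℕ) (hk : 2 ≤ k) (lam : ℝ) (hlam : 0 < lam) :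
    Filter.Tendsto
      (fun g : ℝ =>
        (1 - 2 / (Nat.factorial (k - 1) : ℝ) * (g / lam) ^ ((k : ℝ) / 2) *
          besselK k (2 * Real.sqrt (g / lam))) / (g / lam))
      (nhdsWithin 0 (Set.Ioi 0)) (nhds (1 / ((k : ℝ) - 1))) := by
  obtain ⟨n, rfl⟩ : ∃ n, k = n + 1 + 1 := ⟨k - 2, by omega⟩
  have hg : Tendsto (fun g : ℝ => g / lam) (𝓝[>] 0) (𝓝[>] 0) := by
    refine tendsto_nhdsWithin_iff.2 ⟨?_, ?_⟩
    · have : Tendsto (fun g : ℝ => g / lam) (𝓝 0) (𝓝 (0 / lam)) := tendsto_id.div_const lam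
      rw [zero_div] at this
      exact this.mono_left nhdsWithin_le_nhds
    · filter_upwards [self_mem_nhdsWithin] with g hg
      exact div_pos hg hlam
  have hfac : ((n + 1).factorial : ℝ) = ((n : ℝ) + 1) * n.factorial := by
    rw [Nat.factorial_succ]; push_cast; ring
  have hn0 : (n.factorial : ℝ) ≠ 0 := by positivity
  have hn1 : ((n : ℝ) + 1) ≠ 0 := by positivity
  have hF0 : ((n + 1).factorial : ℝ) ≠ 0 := by positivity
  have h := ((aux_lim_s16 n).comp hg).div_const ((n + 1).factorial : ℝ)
  have e : (n.factorial : ℝ) / ((n + 1).factorial : ℝ) = 1 / (((n + 1 + 1 : ℕ) : ℝ) - 1) := by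
    rw [hfac]; push_cast
    rw [add_sub_cancel_right]
    field_simp
  rw [e] at h
  refine h.congr' ?_
  filter_upwards [self_mem_nhdsWithin] with g hg
  have hy : 0 < g / lam := div_pos hg hlam
  simp only [Function.comp]
  rw [← aux_bessel_s16 (n + 1) (g / lam) hy, Nat.add_sub_cancel]
  generalize (g / lam) ^ (((n + 1 + 1 : ℕ) : ℝ) / 2) = p
  generalize besselK _ _ = q
  generalize g / lam = y at hy
  field_simp
end

section
/- Let m ≥ 2 be an integer and c, λ > 0 reals. Define, for γ > 0, P(γ) := 1 − (2/(m−1)!)·(c/(λ·γ))^{m/2}·K(m, 2·√(c/(λ·γ))). Then lim_{γ → ∞} −ln(P(γ))/ln(γ) = 1; that is, the diversity order equals one. -/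
open MeasureTheory Real Set Filter Topology

/-- Exact outage probability of the equal-eigenvalue FRIS case with threshold `R̃ = c/γ`:
`P(γ) = 1 − (2/(m−1)!)·(c/(λ·γ))^{m/2}·K(m, 2·√(c/(λ·γ)))`. -/
noncomputable def outageP (m : ℕ) (c lam γ : ℝ) : ℝ :=
  1 - 2 / (Nat.factorial (m - 1) : ℝ) * (c / (lam * γ)) ^ ((m : ℝ) / 2) *
    besselK m (2 * Real.sqrt (c / (lam * γ)))

theorem bk_gint (p : ℝ) (hp : 0 < p) :
    IntegrableOn (fun s : ℝ => s ^ (p - 1) * Real.exp (-s)) (Ioi 0) := by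
  have := Real.GammaIntegral_convergent hp
  refine this.congr_fun (fun s _ => ?_) measurableSet_Ioi
  ring

theorem bk_int (p z : ℝ) (hp : 0 < p) (hz : 0 < z) :
    IntegrableOn (fun s : ℝ => s ^ (p - 1) * Real.exp (-s) * Real.exp (-(z / s))) (Ioi 0) := by
  refine Integrable.mono' (bk_gint p hp) (by fun_prop) ?_
  refine (ae_restrict_iff' measurableSet_Ioi).2 (Eventually.of_forall fun s hs => ?_)
  have hs : 0 < s := hs
  have h1 : Real.exp (-(z / s)) ≤ 1 := Real.exp_le_one_iff.2 (by
    have : 0 < z / s := by positivity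
    linarith)
  rw [Real.norm_of_nonneg (by positivity)]
  exact mul_le_of_le_one_right (by positivity) h1

theorem bk_image (q : ℝ) (hq : 0 < q) : (fun t : ℝ => q * Real.exp t) '' univ = Ioi 0 := by
  ext s
  simp only [image_univ, mem_range, mem_Ioi]
  constructor
  · rintro ⟨t, rfl⟩; positivity
  · intro hs
    refine ⟨Real.log (s / q), ?_⟩
    rw [Real.exp_log (by positivity)]
    field_simp

theorem bk_ptw (m : ℕ) (q t : ℝ) (hq : 0 < q) :
    |q * Real.exp t| • ((q * Real.exp t) ^ ((m : ℝ) - 1) * Real.exp (-(q * Real.exp t)) *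
      Real.exp (-(q ^ 2 / (q * Real.exp t))))
    = q ^ m * (Real.exp (-(2 * q * Real.cosh t)) * Real.exp (m * t)) := by
  have hpos : 0 < q * Real.exp t := by positivity
  rw [abs_of_pos hpos, smul_eq_mul, Real.rpow_sub_one hpos.ne', Real.rpow_natCast, mul_pow,
    ← Real.exp_nat_mul, Real.cosh_eq]
  have h1 : q ^ 2 / (q * Real.exp t) = q * Real.exp (-t) := by
    rw [Real.exp_neg]; field_simp
  have h2 : -(2 * q * ((Real.exp t + Real.exp (-t)) / 2))
      = -(q * Real.exp t) + -(q * Real.exp (-t)) := by ring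
  rw [h1, h2, Real.exp_add]
  field_simp

theorem bk_key (m : ℕ) (hm : 0 < m) (q : ℝ) (hq : 0 < q) :
    2 * q ^ m * besselK m (2 * q)
      = ∫ s in Ioi (0 : ℝ), s ^ ((m : ℝ) - 1) * Real.exp (-s) * Real.exp (-(q ^ 2 / s)) := by
  have hd : ∀ t ∈ (univ : Set ℝ),
      HasDerivWithinAt (fun t : ℝ => q * Real.exp t) (q * Real.exp t) univ t :=
    fun t _ => ((Real.hasDerivAt_exp t).const_mul q).hasDerivWithinAt
  have hinj : InjOn (fun t : ℝ => q * Real.exp t) univ := by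
    intro a _ b _ hab
    exact Real.exp_injective (mul_left_cancel₀ hq.ne' hab)
  have hI := integral_image_eq_integral_abs_deriv_smul MeasurableSet.univ hd hinj
    (fun s => s ^ ((m : ℝ) - 1) * Real.exp (-s) * Real.exp (-(q ^ 2 / s)))
  have hG := integrableOn_image_iff_integrableOn_abs_deriv_smul MeasurableSet.univ hd hinj
    (fun s => s ^ ((m : ℝ) - 1) * Real.exp (-s) * Real.exp (-(q ^ 2 / s)))
  rw [bk_image q hq] at hI hG
  have hG' := hG.1 (bk_int m (q ^ 2) (by exact_mod_cast hm) (by positivity))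
  simp only [bk_ptw m q _ hq] at hI hG'
  rw [hI, Measure.restrict_univ, integral_const_mul]
  rw [integrableOn_univ] at hG'
  have hG2 : Integrable (fun t : ℝ => Real.exp (-(2 * q * Real.cosh t)) * Real.exp (m * t)) := by
    refine (hG'.const_mul (q ^ m)⁻¹).congr (Eventually.of_forall fun t => ?_)
    simp only
    field_simp
  rw [← intervalIntegral.integral_Iic_add_Ioi (b := 0) hG2.integrableOn hG2.integrableOn]
  have hn := integral_comp_neg_Ioi (0 : ℝ)
    (fun t : ℝ => Real.exp (-(2 * q * Real.cosh t)) * Real.exp (m * t))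
  rw [neg_zero] at hn
  rw [← hn, ← integral_add (hG2.comp_neg.integrableOn) hG2.integrableOn]
  unfold besselK
  rw [mul_comm 2, mul_assoc, ← integral_const_mul]
  congr 1
  refine setIntegral_congr_fun measurableSet_Ioi fun t _ => ?_
  simp only [Real.cosh_neg, Real.cosh_eq (m * t)]
  ring_nf

theorem bk_P (m : ℕ) (hm : 2 ≤ m) (c lam γ : ℝ) (hz : 0 < c / (lam * γ)) :
    outageP m c lam γ = (1 / (Nat.factorial (m - 1) : ℝ)) *
      ∫ s in Ioi (0 : ℝ), s ^ ((m : ℝ) - 1) * Real.exp (-s) *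
        (1 - Real.exp (-(c / (lam * γ) / s))) := by
  unfold outageP
  set z := c / (lam * γ)
  have hm0 : (0 : ℝ) < m := by exact_mod_cast (by omega : 0 < m)
  have hk := bk_key m (by omega) (√z) (Real.sqrt_pos.2 hz)
  rw [Real.sq_sqrt hz.le] at hk
  have hpow : z ^ ((m : ℝ) / 2) = √z ^ m := by
    rw [Real.sqrt_eq_rpow, ← Real.rpow_natCast, ← Real.rpow_mul hz.le]
    ring_nf
  have hfac : (Nat.factorial (m - 1) : ℝ) =
      ∫ s in Ioi (0 : ℝ), s ^ ((m : ℝ) - 1) * Real.exp (-s) := by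
    obtain ⟨k, rfl⟩ : ∃ k, m = k + 1 := ⟨m - 1, by omega⟩
    have := Real.Gamma_nat_eq_factorial k
    rw [Real.Gamma_eq_integral (by positivity)] at this
    simp only [Nat.add_sub_cancel]
    rw [← this]
    push_cast
    congr 1
    ext s
    ring
  simp only [mul_sub, mul_one]
  rw [integral_sub (bk_gint m hm0) (bk_int m z hm0 hz), ← hfac, ← hk, hpow]
  have : (Nat.factorial (m - 1) : ℝ) ≠ 0 := by positivity
  field_simp

theorem bk_int2 (m : ℕ) (hm : 2 ≤ m) (z : ℝ) (hz : 0 < z) :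
    IntegrableOn (fun s : ℝ => s ^ ((m : ℝ) - 1) * Real.exp (-s) *
        (1 - Real.exp (-(z / s)))) (Ioi 0) := by
  have hm0 : (0 : ℝ) < m := by exact_mod_cast (by omega : 0 < m)
  refine ((bk_gint m hm0).sub (bk_int m z hm0 hz)).congr (Eventually.of_forall fun s => ?_)
  simp only [Pi.sub_apply]
  ring

theorem bk_upper (m : ℕ) (hm : 2 ≤ m) (z : ℝ) (hz : 0 < z) :
    ∫ s in Ioi (0 : ℝ), s ^ ((m : ℝ) - 1) * Real.exp (-s) * (1 - Real.exp (-(z / s)))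
      ≤ z * ∫ s in Ioi (0 : ℝ), s ^ ((m : ℝ) - 1 - 1) * Real.exp (-s) := by
  have hm1 : (0 : ℝ) < (m : ℝ) - 1 := by
    have : (2 : ℝ) ≤ m := by exact_mod_cast hm
    linarith
  rw [← integral_const_mul]
  refine setIntegral_mono_on (bk_int2 m hm z hz) ((bk_gint _ hm1).const_mul z)
    measurableSet_Ioi fun s hs => ?_
  have hs : 0 < s := hs
  have h1 : 1 - Real.exp (-(z / s)) ≤ z / s := by
    have := Real.add_one_le_exp (-(z / s)); linarith
  calc _ ≤ s ^ ((m : ℝ) - 1) * Real.exp (-s) * (z / s) := by gcongr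
    _ = _ := by rw [Real.rpow_sub_one hs.ne' ((m : ℝ) - 1)]; ring

theorem bk_lower (m : ℕ) (hm : 2 ≤ m) (z : ℝ) (hz : 0 < z) (hz1 : z ≤ 1) :
    z * ((1 / 2 : ℝ) ^ (m : ℝ) * Real.Gamma m) ≤
    ∫ s in Ioi (0 : ℝ), s ^ ((m : ℝ) - 1) * Real.exp (-s) * (1 - Real.exp (-(z / s))) := by
  have hm0 : (0 : ℝ) < m := by exact_mod_cast (by omega : 0 < m)
  rw [← Real.integral_rpow_mul_exp_neg_mul_Ioi hm0 (by norm_num : (0 : ℝ) < 2),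
    ← integral_const_mul]
  have hle : ∀ s : ℝ, 0 < s → z * (s ^ ((m : ℝ) - 1) * Real.exp (-(2 * s))) ≤
      s ^ ((m : ℝ) - 1) * Real.exp (-s) * (1 - Real.exp (-(z / s))) := by
    intro s hs
    have h0 : z / s + 1 ≤ Real.exp (z / s) := Real.add_one_le_exp _
    have h1 : Real.exp (-(z / s)) ≤ s / (z + s) := by
      rw [Real.exp_neg]
      calc _ ≤ (z / s + 1)⁻¹ := by gcongr
        _ = _ := by field_simp
    have h2 : Real.exp (-s) ≤ 1 / (1 + s) := by
      rw [Real.exp_neg, ← one_div]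
      have := Real.add_one_le_exp s
      gcongr
      linarith
    have h3 : z * Real.exp (-s) ≤ 1 - Real.exp (-(z / s)) := by
      calc z * Real.exp (-s) ≤ z * (1 / (1 + s)) := by gcongr
        _ ≤ z * (1 / (z + s)) := by gcongr
        _ = 1 - s / (z + s) := by field_simp; ring
        _ ≤ _ := by linarith
    have h4 : Real.exp (-(2 * s)) = Real.exp (-s) * Real.exp (-s) := by
      rw [← Real.exp_add]; ring_nf
    calc _ = s ^ ((m : ℝ) - 1) * Real.exp (-s) * (z * Real.exp (-s)) := by rw [h4]; ring
      _ ≤ _ := by gcongr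
  refine integral_mono_of_nonneg ?_ (bk_int2 m hm z hz) ?_
  · refine (ae_restrict_iff' measurableSet_Ioi).2 (Eventually.of_forall fun s hs => ?_)
    have hs : 0 < s := hs
    simp only [Pi.zero_apply]
    positivity
  · exact (ae_restrict_iff' measurableSet_Ioi).2 (Eventually.of_forall fun s hs => hle s hs)

theorem bk_limit (f : ℝ → ℝ) (A B : ℝ) (hA : 0 < A)
    (h : ∀ᶠ γ in atTop, A / γ ≤ f γ ∧ f γ ≤ B / γ) :
    Tendsto (fun γ : ℝ => -Real.log (f γ) / Real.log γ) atTop (nhds 1) := by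
  have hl : ∀ C : ℝ, Tendsto (fun γ : ℝ => 1 - C / Real.log γ) atTop (nhds 1) := by
    intro C
    simpa using (Real.tendsto_log_atTop.const_div_atTop C).const_sub 1
  refine tendsto_of_tendsto_of_tendsto_of_le_of_le' (hl (Real.log B)) (hl (Real.log A)) ?_ ?_
  all_goals
    filter_upwards [h, eventually_gt_atTop 1] with γ ⟨h1, h2⟩ hγ
    have hγ0 : 0 < γ := by linarith
    have hlog : 0 < Real.log γ := Real.log_pos hγ
    have hAp : 0 < A / γ := by positivity
    have hf : 0 < f γ := hAp.trans_le h1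
    have hB : 0 < B := by
      have := hf.trans_le h2
      exact (div_pos_iff_of_pos_right hγ0).1 this
    have e1 := Real.log_le_log hAp h1
    have e2 := Real.log_le_log hf h2
    rw [Real.log_div hA.ne' hγ0.ne'] at e1
    rw [Real.log_div hB.ne' hγ0.ne'] at e2
    rw [one_sub_div hlog.ne']
    gcongr
    linarith

/-- The true diversity order equals one: `lim_{γ → ∞} −ln(P(γ))/ln(γ) = 1`. -/
theorem diversity_order_eq_one (m : ℕ) (hm : 2 ≤ m) (c lam : ℝ) (hc : 0 < c)
    (hlam : 0 < lam) :
    Filter.Tendsto (fun γ : ℝ => -Real.log (outageP m c lam γ) / Real.log γ)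
      Filter.atTop (nhds 1) := by
  have hm0 : (0 : ℝ) < m := by exact_mod_cast (by omega : 0 < m)
  have hG := Real.Gamma_pos_of_pos hm0
  refine bk_limit _
    (1 / (Nat.factorial (m - 1) : ℝ) * (c / lam * ((1 / 2 : ℝ) ^ (m : ℝ) * Real.Gamma m)))
    (1 / (Nat.factorial (m - 1) : ℝ) *
      (c / lam * ∫ s in Ioi (0 : ℝ), s ^ ((m : ℝ) - 1 - 1) * Real.exp (-s)))
    (by positivity) ?_
  filter_upwards [eventually_gt_atTop 0, eventually_ge_atTop (c / lam)] with γ hγ hγ1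
  have hz : 0 < c / (lam * γ) := by positivity
  have hzz : c / (lam * γ) = c / lam / γ := by field_simp
  have hz1 : c / (lam * γ) ≤ 1 := by
    rw [hzz, div_le_one hγ]; exact hγ1
  rw [bk_P m hm c lam γ hz]
  constructor
  · calc _ = 1 / (Nat.factorial (m - 1) : ℝ) *
          (c / (lam * γ) * ((1 / 2 : ℝ) ^ (m : ℝ) * Real.Gamma m)) := by rw [hzz]; ring
      _ ≤ _ := by gcongr; exact bk_lower m hm _ hz hz1
  · calc _ ≤ 1 / (Nat.factorial (m - 1) : ℝ) * (c / (lam * γ) *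
          ∫ s in Ioi (0 : ℝ), s ^ ((m : ℝ) - 1 - 1) * Real.exp (-s)) := by
            gcongr; exact bk_upper m hm _ hz
      _ = _ := by rw [hzz]; ring
end
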